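/- arXiv:2307.05859 — 2 statements merged into one kernel-verified Lean document; each statement's English description precedes it below -/
import Mathlib

section
/- Assume k is algebraically closed. Let Δ be trinomial data over k. If k[Δ] is a smooth k-algebra (equivalently, Spec(k[Δ]) is a smooth variety over k), then k[Δ] is isomorphic as a k-algebra to a polynomial ring over k. -/
open MvPolynomial

/-- Trinomial data `Δ` over a field `k`: an integer `n ≥ 2` with a partition
`n = n_0 + ⋯ + n_r` (`r ≥ 1`, `n_i ≥ 1`), exponent vectors `β_i ∈ ℤ₊^{n_i}` with
`gcd(d_i, d_j) = 1` for `i ≠ j` where `d_i = gcd(β_{i1}, …, β_{i n_i})`, and distinct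
scalars `λ_2, …, λ_r ∈ k^*`. -/
structure TrinomialData (k : Type*) [Field k] where
  /-- the number `r` of parts minus one -/
  r : ℕ
  one_le_r : 1 ≤ r
  /-- the partition `n = n_0 + ⋯ + n_r` -/
  n : Fin (r + 1) → ℕ
  one_le_n : ∀ i, 1 ≤ n i
  two_le_total : 2 ≤ ∑ i, n i
  /-- the exponent vectors `β_i` -/
  β : (i : Fin (r + 1)) → Fin (n i) → ℕ
  β_pos : ∀ i j, 0 < β i j
  gcd_coprime : ∀ i j, i ≠ j →
    Nat.Coprime (Finset.univ.gcd (β i)) (Finset.univ.gcd (β j))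
  /-- the scalars `λ_i` (only the values for `2 ≤ i` are relevant) -/
  lam : Fin (r + 1) → k
  lam_ne_zero : ∀ i : Fin (r + 1), 2 ≤ (i : ℕ) → lam i ≠ 0
  lam_injOn : ∀ i j : Fin (r + 1), 2 ≤ (i : ℕ) → 2 ≤ (j : ℕ) → lam i = lam j → i = j

variable {k : Type*} [Field k]

/-- The variables `t_{ij}`, `0 ≤ i ≤ r`, `1 ≤ j ≤ n_i`. -/
def TrinomialData.Vars (Δ : TrinomialData k) : Type :=
  Σ i : Fin (Δ.r + 1), Fin (Δ.n i)

/-- The monomial `T_i^{β_i} = t_{i1}^{β_{i1}} ⋯ t_{i n_i}^{β_{i n_i}}`. -/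
noncomputable def TrinomialData.mon (Δ : TrinomialData k) (i : Fin (Δ.r + 1)) :
    MvPolynomial Δ.Vars k :=
  ∏ j : Fin (Δ.n i), (X (⟨i, j⟩ : Δ.Vars)) ^ Δ.β i j

/-- The ideal of trinomial relations `T_0^{β_0} + λ_i T_1^{β_1} + T_i^{β_i}`, `2 ≤ i ≤ r`. -/
noncomputable def TrinomialData.relIdeal (Δ : TrinomialData k) :
    Ideal (MvPolynomial Δ.Vars k) :=
  Ideal.span {p | ∃ i : Fin (Δ.r + 1), 2 ≤ (i : ℕ) ∧
    p = Δ.mon 0 + C (Δ.lam i) * Δ.mon 1 + Δ.mon i}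

/-- The ring `k[Δ]` associated to trinomial data `Δ`. -/
noncomputable abbrev TrinomialData.Ring (Δ : TrinomialData k) : Type _ :=
  MvPolynomial Δ.Vars k ⧸ Δ.relIdeal

/-- `Δ` is reduced if either `r = 1` and `β_{01} = β_{11} = 1`, or `r ≥ 2` and
`|β_i| ≥ 2` for each `i`. -/
def TrinomialData.Reduced (Δ : TrinomialData k) : Prop :=
  (Δ.r = 1 ∧ Δ.β 0 ⟨0, Δ.one_le_n 0⟩ = 1 ∧ Δ.β 1 ⟨0, Δ.one_le_n 1⟩ = 1) ∨
  (2 ≤ Δ.r ∧ ∀ i, 2 ≤ ∑ j, Δ.β i j)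

/-!
The presentation of `k[Δ]` is symmetric in the indices: attach to `i` the vector `(1, 0)`, `(0, 1)`
or `(-1, -λ_i)` and let `[i, j]` be the determinant of two such vectors, which is nonzero for
`i ≠ j`. The ideal of relations `I` contains every trinomial
`[b, c] T_a + [c, a] T_b + [a, b] T_c`, and it is generated by those with `a ≠ b` fixed.

Let `𝔪` be the maximal ideal of the origin. If `T_a`, `T_b`, `T_c` all had degree at least `2`, this
trinomial would be a relation without linear part, so smoothness at the origin would force it into
`𝔪 I`. As no `T_i` divides another, elements of `𝔪 I` have no term `T_a`, but the trinomial has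
coefficient `[b, c] ≠ 0` there. Hence outside some pair `a ≠ b` every `T_c` is a single variable,
and the generators above with this `a` and `b` merely eliminate these variables.
-/

section FormallySmooth

theorem map_eq_map_of_mem_sq {P Q : Type*} [CommRing P] [CommRing Q] {f g : P →+* Q}
    {m : Ideal P} {J : Ideal Q} (hfg : ∀ p ∈ m, f p - g p ∈ J)
    (hf : m.map f * J = ⊥) (hg : m.map g * J = ⊥) {x : P} (hx : x ∈ m ^ 2) : f x = g x := by
  have mul_eq_zero_of {h : P →+* Q} (hh : m.map h * J = ⊥) {a : P} (ha : a ∈ m) {y : Q}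
      (hy : y ∈ J) : h a * y = 0 := by
    simpa only [hh, Ideal.mem_bot] using Ideal.mul_mem_mul (Ideal.mem_map_of_mem h ha) hy
  rw [pow_two] at hx
  induction hx using Submodule.mul_induction_on' with
  | mem_mul_mem a ha b hb =>
    simp only [map_mul]
    linear_combination mul_eq_zero_of hf ha (hfg b hb) + mul_eq_zero_of hg hb (hfg a ha)
  | add a _ b _ iha ihb => rw [map_add, map_add, iha, ihb]

theorem exists_algHom_sub_mk_mem_map_of_formallySmooth (R : Type*) {P : Type*} [CommRing R]
    [CommRing P] [Algebra R P] {I J : Ideal P} (hJI : J ≤ I) (hIJ : I ^ 2 ≤ J)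
    [Algebra.FormallySmooth R (P ⧸ I)] :
    ∃ f : P →ₐ[R] P ⧸ J, (∀ p ∈ I, f p = 0) ∧
      ∀ p, f p - Ideal.Quotient.mk J p ∈ I.map (Ideal.Quotient.mk J) := by
  let g : P ⧸ J →ₐ[R] P ⧸ I := Ideal.Quotient.factorₐ R hJI
  have ker_g : RingHom.ker (g : P ⧸ J →+* P ⧸ I) = I.map (Ideal.Quotient.mk J) :=
    Ideal.Quotient.factor_ker hJI
  have nilpotent : IsNilpotent (RingHom.ker (g : P ⧸ J →+* P ⧸ I)) := by
    refine ⟨2, ?_⟩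
    rw [ker_g, ← Ideal.map_pow, Ideal.zero_eq_bot, eq_bot_iff, ← Ideal.map_quotient_self J]
    exact Ideal.map_mono hIJ
  have surjective : Function.Surjective g := Ideal.Quotient.factor_surjective hJI
  let s := Algebra.FormallySmooth.liftOfSurjective (AlgHom.id R (P ⧸ I)) g surjective nilpotent
  refine ⟨s.comp (Ideal.Quotient.mkₐ R I), fun p hp ↦ ?_, fun p ↦ ?_⟩
  · rw [AlgHom.comp_apply, Ideal.Quotient.mkₐ_eq_mk, Ideal.Quotient.eq_zero_iff_mem.2 hp, map_zero]
  · have g_s : g (s (Ideal.Quotient.mk I p)) = Ideal.Quotient.mk I p :=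
      Algebra.FormallySmooth.liftOfSurjective_apply _ _ surjective nilpotent _
    rw [← ker_g, RingHom.mem_ker, map_sub, sub_eq_zero]
    exact g_s

/-- A splitting of `P ⧸ (m * I) → P ⧸ I` differs from the quotient map by a derivation into
`I ⧸ (m * I)`, which vanishes on `m ^ 2`. -/
theorem inf_sq_le_mul_of_formallySmooth (R : Type*) {P : Type*} [CommRing R] [CommRing P]
    [Algebra R P] {I m : Ideal P} (hIm : I ≤ m) [Algebra.FormallySmooth R (P ⧸ I)] :
    I ⊓ m ^ 2 ≤ m * I := by
  let π := Ideal.Quotient.mk (m * I)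
  obtain ⟨f, f_eq_zero, f_sub_mem⟩ :=
    exists_algHom_sub_mk_mem_map_of_formallySmooth R (I := I) (J := m * I) Ideal.mul_le_right
      (pow_two I ▸ Ideal.mul_mono_left hIm)
  have map_π_mul : m.map π * I.map π = ⊥ :=
    (Ideal.map_mul π m I).symm.trans (Ideal.map_quotient_self (m * I))
  have map_f_le : m.map (f : P →+* P ⧸ m * I) ≤ m.map π :=
    Ideal.map_le_iff_le_comap.2 fun p hp ↦ by
      simpa [π] using add_mem (Ideal.map_mono hIm (f_sub_mem p)) (Ideal.mem_map_of_mem π hp)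
  have map_f_mul : m.map (f : P →+* P ⧸ m * I) * I.map π = ⊥ :=
    eq_bot_iff.2 (map_π_mul ▸ Ideal.mul_mono_left map_f_le)
  rintro x ⟨hxI, hxm⟩
  have f_eq_π : f x = π x :=
    map_eq_map_of_mem_sq (fun p _ ↦ f_sub_mem p) map_f_mul map_π_mul hxm
  exact Ideal.Quotient.eq_zero_iff_mem.1 (f_eq_π.symm.trans (f_eq_zero x hxI))

end FormallySmooth

section Polynomials

variable {σ R : Type*}

open scoped Pointwise in
theorem coeff_eq_zero_of_mem_idealOfVars_mul [CommSemiring R] {S : Set (σ →₀ ℕ)}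
    (hS : IsAntichain (· ≤ ·) S) {d : σ →₀ ℕ} (hd : d ∈ S) {p : MvPolynomial σ R}
    (hp : p ∈ idealOfVars σ R * Ideal.span ((monomial · 1) '' S)) : coeff d p = 0 := by
  have mem_span : p ∈ Ideal.span ((monomial · (1 : R)) ''
      ((Finsupp.degree ⁻¹' {1} : Set (σ →₀ ℕ)) + S)) := by
    rw [← pow_one (idealOfVars σ R), pow_idealOfVars_eq_span, Ideal.span_mul_span'] at hp
    refine Ideal.span_mono ?_ hp
    rintro _ ⟨_, ⟨u, hu, rfl⟩, _, ⟨e, he, rfl⟩, rfl⟩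
    exact ⟨u + e, Set.add_mem_add hu he, by simp [monomial_mul]⟩
  by_contra hcoeff
  obtain ⟨_, ⟨u, hu, e, he, rfl⟩, hle⟩ :=
    mem_ideal_span_monomial_image.1 mem_span d (mem_support_iff.2 hcoeff)
  obtain rfl : e = d := hS.eq he hd (le_add_self.trans hle)
  obtain rfl : u = 0 := by simpa using hle
  simp at hu

theorem nonempty_quotient_span_X_sub_algEquiv [CommRing R] (s : Set σ) {f : σ → MvPolynomial σ R}
    (hf : ∀ v ∉ s, f v ∈ supported R s) :
    Nonempty ((MvPolynomial σ R ⧸ Ideal.span ((fun v ↦ X v - f v) '' sᶜ)) ≃ₐ[R]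
      MvPolynomial s R) := by
  classical
  set I := Ideal.span ((fun v ↦ X v - f v) '' sᶜ)
  simp only [supported_eq_range_rename, AlgHom.mem_range] at hf
  choose! f' hf' using hf
  let φ : MvPolynomial σ R →ₐ[R] MvPolynomial s R :=
    aeval fun v ↦ if hv : v ∈ s then X ⟨v, hv⟩ else f' v
  have φ_rename (p : MvPolynomial s R) : φ (rename (↑) p) = p := by
    rw [aeval_rename]
    convert aeval_X_left_apply p using 3
    ext1 v
    simp
  have φ_X_sub : ∀ v ∉ s, φ (X v - f v) = 0 := fun v hv ↦ by
    rw [map_sub, ← hf' v hv, φ_rename, aeval_X, dif_neg hv, sub_self]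
  have φ_eq_zero : ∀ p ∈ I, φ p = 0 := fun p hp ↦ by
    have I_le_ker : I ≤ RingHom.ker φ := Ideal.span_le.2 (Set.image_subset_iff.2 φ_X_sub)
    exact I_le_ker hp
  refine ⟨AlgEquiv.ofAlgHom (Ideal.Quotient.liftₐ I φ φ_eq_zero)
    ((Ideal.Quotient.mkₐ R I).comp (rename (↑))) ?_ ?_⟩
  · ext1 v
    exact φ_rename (X v)
  · refine Ideal.Quotient.algHom_ext R (MvPolynomial.algHom_ext fun v ↦ ?_)
    suffices Ideal.Quotient.mk I (rename (↑) (φ (X v))) = Ideal.Quotient.mk I (X v) from this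
    rw [aeval_X]
    split_ifs with hv
    · rw [rename_X]
    · rw [hf' v hv, eq_comm, Ideal.Quotient.eq]
      exact Ideal.subset_span ⟨v, hv, rfl⟩

end Polynomials

section ThreeTerm

variable {ι R M : Type*} [CommRing R] [AddCommGroup M] [Module R M] (p : ι → R × R) (T : ι → M)

/-- The `2 × 2` minor of a family of vectors `p : ι → R × R` on the columns `i` and `j`. -/
def bracket (i j : ι) : R := (p i).1 * (p j).2 - (p i).2 * (p j).1

/-- The left-hand side of the linear relation between `T a`, `T b`, `T c` whose coefficients are
those of Cramer's linear relation between the plane vectors `p a`, `p b`, `p c`. -/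
def threeTerm (a b c : ι) : M := bracket p b c • T a + bracket p c a • T b + bracket p a b • T c

theorem threeTerm_left (a b : ι) : threeTerm p T a b a = 0 := by
  unfold threeTerm bracket
  module

theorem threeTerm_right (a b : ι) : threeTerm p T a b b = 0 := by
  unfold threeTerm bracket
  module

theorem bracket_smul_threeTerm (a b c d e : ι) :
    bracket p a b • threeTerm p T c d e = bracket p d e • threeTerm p T a b c +
      bracket p e c • threeTerm p T a b d + bracket p c d • threeTerm p T a b e := by
  unfold threeTerm bracket
  module

variable {p T} in
theorem threeTerm_mem_of_isUnit_bracket {N : Submodule R M} {a b : ι} (hab : IsUnit (bracket p a b))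
    (hN : ∀ c, c ≠ a → c ≠ b → threeTerm p T a b c ∈ N) (c d e : ι) :
    threeTerm p T c d e ∈ N := by
  have threeTerm_mem (i : ι) : threeTerm p T a b i ∈ N := by
    rcases eq_or_ne i a with rfl | hia
    · exact threeTerm_left p T i b ▸ N.zero_mem
    rcases eq_or_ne i b with rfl | hib
    · exact threeTerm_right p T a i ▸ N.zero_mem
    exact hN i hia hib
  rw [← N.smul_mem_iff_of_isUnit hab, bracket_smul_threeTerm]
  exact add_mem (add_mem (N.smul_mem _ (threeTerm_mem c)) (N.smul_mem _ (threeTerm_mem d)))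
    (N.smul_mem _ (threeTerm_mem e))

end ThreeTerm

namespace TrinomialData

variable (Δ : TrinomialData k)

instance : Finite Δ.Vars := inferInstanceAs (Finite (Σ i : Fin (Δ.r + 1), Fin (Δ.n i)))

/-- The variable `t_{ij}`, as an element of `Δ.Vars`. -/
def var (i : Fin (Δ.r + 1)) (j : Fin (Δ.n i)) : Δ.Vars := Sigma.mk i j

variable {Δ} in
/-- The index `i` of the monomial `T_i` in which a variable `t_{ij}` occurs. -/
def Vars.block (v : Δ.Vars) : Fin (Δ.r + 1) := Sigma.fst v

theorem var_injective (i : Fin (Δ.r + 1)) : Function.Injective (Δ.var i) :=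
  fun _ _ h ↦ sigma_mk_injective (β := fun i ↦ Fin (Δ.n i)) h

variable {Δ} in
theorem exists_eq_var (v : Δ.Vars) : ∃ i j, v = Δ.var i j := ⟨_, Sigma.snd v, rfl⟩

theorem mon_eq_prod (i : Fin (Δ.r + 1)) : Δ.mon i = ∏ j, X (Δ.var i j) ^ Δ.β i j := rfl

theorem val_one : ((1 : Fin (Δ.r + 1)) : ℕ) = 1 := by
  rw [Fin.val_one', Nat.mod_eq_of_lt (Nat.lt_succ_of_le Δ.one_le_r)]

theorem eq_zero_or_eq_one_or_two_le (i : Fin (Δ.r + 1)) : i = 0 ∨ i = 1 ∨ 2 ≤ (i : ℕ) := by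
  simp only [Fin.ext_iff, Δ.val_one, Fin.val_zero]
  omega

/-- The vector attached to the index `i`, chosen so that `T_i = (vec i).1 T_0 + (vec i).2 T_1`
holds in `k[Δ]`. -/
def vec (i : Fin (Δ.r + 1)) : k × k :=
  if (i : ℕ) = 0 then (1, 0) else if (i : ℕ) = 1 then (0, 1) else (-1, -Δ.lam i)

theorem vec_zero : Δ.vec 0 = (1, 0) := rfl

theorem vec_one : Δ.vec 1 = (0, 1) := by
  rw [vec, Δ.val_one, if_neg one_ne_zero, if_pos rfl]

theorem vec_of_two_le {i : Fin (Δ.r + 1)} (hi : 2 ≤ (i : ℕ)) : Δ.vec i = (-1, -Δ.lam i) := by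
  rw [vec, if_neg (by omega), if_neg (by omega)]

theorem bracket_vec_ne_zero {i j : Fin (Δ.r + 1)} (hij : i ≠ j) : bracket Δ.vec i j ≠ 0 := by
  unfold bracket
  rcases Δ.eq_zero_or_eq_one_or_two_le i with rfl | rfl | hi <;>
    rcases Δ.eq_zero_or_eq_one_or_two_le j with rfl | rfl | hj
  case inr.inr.inr.inr =>
    intro h
    simp only [Δ.vec_of_two_le hi, Δ.vec_of_two_le hj] at h
    exact hij (Δ.lam_injOn i j hi hj (by linear_combination -h))
  all_goals simp_all [vec_zero, vec_one, vec_of_two_le, lam_ne_zero]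

/-- The trinomial relation between `T_a`, `T_b` and `T_c` for arbitrary indices; for `a = 0`,
`b = 1`, `2 ≤ c` it is the defining relation `T_0 + λ_c T_1 + T_c`. -/
noncomputable abbrev trinomial (a b c : Fin (Δ.r + 1)) : MvPolynomial Δ.Vars k :=
  threeTerm Δ.vec Δ.mon a b c

theorem trinomial_zero_one_of_two_le {i : Fin (Δ.r + 1)} (hi : 2 ≤ (i : ℕ)) :
    Δ.trinomial 0 1 i = Δ.mon 0 + C (Δ.lam i) * Δ.mon 1 + Δ.mon i := by
  simp [threeTerm, bracket, vec_zero, vec_one, Δ.vec_of_two_le hi, smul_eq_C_mul]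

theorem trinomial_mem_of_forall_mem {J : Ideal (MvPolynomial Δ.Vars k)} {a b : Fin (Δ.r + 1)}
    (hab : a ≠ b) (hJ : ∀ c, c ≠ a → c ≠ b → Δ.trinomial a b c ∈ J) (c d e : Fin (Δ.r + 1)) :
    Δ.trinomial c d e ∈ J :=
  threeTerm_mem_of_isUnit_bracket (N := J.restrictScalars k) (Δ.bracket_vec_ne_zero hab).isUnit
    hJ c d e

theorem zero_ne_one : (0 : Fin (Δ.r + 1)) ≠ 1 := by
  rw [Ne, Fin.ext_iff, Δ.val_one]
  exact Nat.zero_ne_one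

theorem trinomial_mem_relIdeal (a b c : Fin (Δ.r + 1)) : Δ.trinomial a b c ∈ Δ.relIdeal := by
  refine Δ.trinomial_mem_of_forall_mem Δ.zero_ne_one (fun i hi0 hi1 ↦ ?_) a b c
  have hi : 2 ≤ (i : ℕ) := ((Δ.eq_zero_or_eq_one_or_two_le i).resolve_left hi0).resolve_left hi1
  exact Ideal.subset_span ⟨i, hi, Δ.trinomial_zero_one_of_two_le hi⟩

theorem relIdeal_le_of_trinomial_mem {J : Ideal (MvPolynomial Δ.Vars k)} {a b : Fin (Δ.r + 1)}
    (hab : a ≠ b) (hJ : ∀ c, c ≠ a → c ≠ b → Δ.trinomial a b c ∈ J) : Δ.relIdeal ≤ J := by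
  refine Ideal.span_le.2 ?_
  rintro _ ⟨i, hi, rfl⟩
  rw [← Δ.trinomial_zero_one_of_two_le hi]
  exact Δ.trinomial_mem_of_forall_mem hab hJ 0 1 i

variable {Δ} in
theorem relIdeal_le_of_mon_mem {J : Ideal (MvPolynomial Δ.Vars k)} (hJ : ∀ i, Δ.mon i ∈ J) :
    Δ.relIdeal ≤ J := by
  refine Ideal.span_le.2 ?_
  rintro _ ⟨i, -, rfl⟩
  exact add_mem (add_mem (hJ 0) (Ideal.mul_mem_left _ _ (hJ 1))) (hJ i)

/-- The exponent vector of `T_i` as a monomial in all the variables `t_{ij}`. -/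
noncomputable def exponent (i : Fin (Δ.r + 1)) : Δ.Vars →₀ ℕ :=
  ∑ j : Fin (Δ.n i), Finsupp.single (Δ.var i j) (Δ.β i j)

theorem mon_eq_monomial (i : Fin (Δ.r + 1)) : Δ.mon i = monomial (Δ.exponent i) 1 := by
  simp only [mon_eq_prod, exponent, monomial_sum_one, X_pow_eq_monomial]

theorem degree_exponent (i : Fin (Δ.r + 1)) : (Δ.exponent i).degree = ∑ j, Δ.β i j := by
  simp only [exponent, map_sum, Finsupp.degree_single]

theorem exponent_apply_self (i : Fin (Δ.r + 1)) (j : Fin (Δ.n i)) :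
    Δ.exponent i (Δ.var i j) = Δ.β i j := by
  rw [exponent, Finsupp.finsetSum_apply, Finset.sum_eq_single_of_mem j (Finset.mem_univ j),
    Finsupp.single_eq_same]
  exact fun l _ hlj ↦ Finsupp.single_eq_of_ne fun h ↦ hlj (Δ.var_injective i h).symm

theorem exponent_apply_of_block_ne {i : Fin (Δ.r + 1)} {v : Δ.Vars} (hv : v.block ≠ i) :
    Δ.exponent i v = 0 := by
  rw [exponent, Finsupp.finsetSum_apply]
  exact Finset.sum_eq_zero fun j _ ↦ Finsupp.single_eq_of_ne (by rintro rfl; exact hv rfl)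

theorem eq_of_exponent_le {a b : Fin (Δ.r + 1)} (h : Δ.exponent a ≤ Δ.exponent b) : a = b := by
  by_contra hab
  have β_le := h (Δ.var a ⟨0, Δ.one_le_n a⟩)
  rw [exponent_apply_self, Δ.exponent_apply_of_block_ne (v := Δ.var a _) hab] at β_le
  exact (Δ.β_pos a _).not_ge β_le

theorem exponent_injective : Function.Injective Δ.exponent :=
  fun _ _ h ↦ Δ.eq_of_exponent_le h.le

theorem isAntichain_range_exponent : IsAntichain (· ≤ ·) (Set.range Δ.exponent) := by
  rintro _ ⟨a, rfl⟩ _ ⟨b, rfl⟩ hab hle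
  exact hab (congrArg Δ.exponent (Δ.eq_of_exponent_le hle))

theorem relIdeal_le_span_monomial :
    Δ.relIdeal ≤ Ideal.span ((monomial · 1) '' Set.range Δ.exponent) :=
  relIdeal_le_of_mon_mem fun i ↦ Ideal.subset_span ⟨_, ⟨i, rfl⟩, (Δ.mon_eq_monomial i).symm⟩

theorem one_le_sum_β (i : Fin (Δ.r + 1)) : 1 ≤ ∑ j, Δ.β i j :=
  (Δ.β_pos i ⟨0, Δ.one_le_n i⟩).trans_le
    (Finset.single_le_sum_of_canonicallyOrdered (Finset.mem_univ _))

theorem mon_mem_idealOfVars_pow {i : Fin (Δ.r + 1)} {m : ℕ} (hm : m ≤ ∑ j, Δ.β i j) :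
    Δ.mon i ∈ idealOfVars Δ.Vars k ^ m := by
  rwa [mon_eq_monomial, monomial_mem_pow_idealOfVars_iff _ _ one_ne_zero, degree_exponent]

theorem relIdeal_le_idealOfVars : Δ.relIdeal ≤ idealOfVars Δ.Vars k :=
  relIdeal_le_of_mon_mem fun i ↦
    pow_one (idealOfVars Δ.Vars k) ▸ Δ.mon_mem_idealOfVars_pow (Δ.one_le_sum_β i)

theorem not_pairwise_ne_of_two_le_sum_β [Algebra.FormallySmooth k Δ.Ring] {a b c : Fin (Δ.r + 1)}
    (ha : 2 ≤ ∑ j, Δ.β a j) (hb : 2 ≤ ∑ j, Δ.β b j) (hc : 2 ≤ ∑ j, Δ.β c j) :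
    ¬ (a ≠ b ∧ a ≠ c ∧ b ≠ c) := by
  rintro ⟨hab, hac, hbc⟩
  have mem_sq : Δ.trinomial a b c ∈ idealOfVars Δ.Vars k ^ 2 :=
    add_mem (add_mem (Submodule.smul_of_tower_mem _ _ (Δ.mon_mem_idealOfVars_pow ha))
      (Submodule.smul_of_tower_mem _ _ (Δ.mon_mem_idealOfVars_pow hb)))
      (Submodule.smul_of_tower_mem _ _ (Δ.mon_mem_idealOfVars_pow hc))
  have mem_mul : Δ.trinomial a b c ∈ idealOfVars Δ.Vars k * Δ.relIdeal :=
    inf_sq_le_mul_of_formallySmooth k Δ.relIdeal_le_idealOfVars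
      ⟨Δ.trinomial_mem_relIdeal a b c, mem_sq⟩
  have coeff_eq_zero : coeff (Δ.exponent a) (Δ.trinomial a b c) = 0 :=
    coeff_eq_zero_of_mem_idealOfVars_mul Δ.isAntichain_range_exponent (Set.mem_range_self a)
      (Ideal.mul_mono_right Δ.relIdeal_le_span_monomial mem_mul)
  have coeff_eq_bracket : coeff (Δ.exponent a) (Δ.trinomial a b c) = bracket Δ.vec b c := by
    classical
    simp [threeTerm, mon_eq_monomial, coeff_monomial, Δ.exponent_injective.eq_iff, hab.symm,
      hac.symm]
  exact Δ.bracket_vec_ne_zero hbc (coeff_eq_bracket.symm.trans coeff_eq_zero)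

theorem exists_pair_forall_sum_β_eq_one [Algebra.FormallySmooth k Δ.Ring] :
    ∃ a b : Fin (Δ.r + 1), a ≠ b ∧ ∀ c, c ≠ a → c ≠ b → ∑ j, Δ.β c j = 1 := by
  classical
  let s : Finset (Fin (Δ.r + 1)) := {i | 2 ≤ ∑ j, Δ.β i j}
  have card_s_le : s.card ≤ 2 := by
    by_contra! h
    obtain ⟨a, ha, b, hb, c, hc, hne⟩ := Finset.two_lt_card.1 h
    simp only [s, Finset.mem_filter_univ] at ha hb hc
    exact Δ.not_pairwise_ne_of_two_le_sum_β ha hb hc hne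
  have two_le_card : 2 ≤ (Finset.univ : Finset (Fin (Δ.r + 1))).card := by
    simpa using Δ.one_le_r
  obtain ⟨t, hst, -, card_t⟩ :=
    Finset.exists_subsuperset_card_eq s.subset_univ card_s_le two_le_card
  obtain ⟨a, b, hab, rfl⟩ := Finset.card_eq_two.1 card_t
  refine ⟨a, b, hab, fun c hca hcb ↦ le_antisymm (not_lt.1 fun hc ↦ ?_) (Δ.one_le_sum_β c)⟩
  have hc_mem : c ∈ ({a, b} : Finset _) := hst (Finset.mem_filter_univ c |>.2 hc)
  simp [hca, hcb] at hc_mem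

theorem mon_eq_X {i : Fin (Δ.r + 1)} (hi : ∑ j, Δ.β i j = 1) (j : Fin (Δ.n i)) :
    Δ.mon i = X (Δ.var i j) := by
  obtain ⟨v, hv⟩ := (Finsupp.sum_eq_one_iff _).1 ((Δ.degree_exponent i).trans hi)
  obtain rfl : v = Δ.var i j := by
    by_contra hne
    refine (Δ.β_pos i j).ne' ?_
    rw [← exponent_apply_self, hv, Finsupp.single_eq_of_ne' hne]
  rw [mon_eq_monomial, hv]
  rfl

theorem mon_mem_supported {s : Set Δ.Vars} {i : Fin (Δ.r + 1)} (hs : ∀ j, Δ.var i j ∈ s) :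
    Δ.mon i ∈ supported k s :=
  prod_mem fun j _ ↦ pow_mem (X_mem_supported.2 (hs j)) _

/-- The linear combination of `T_a` and `T_b` that equals `T_c` in `k[Δ]`, for `a ≠ b`. -/
noncomputable def combination (a b c : Fin (Δ.r + 1)) : MvPolynomial Δ.Vars k :=
  -(bracket Δ.vec a b)⁻¹ • (bracket Δ.vec b c • Δ.mon a + bracket Δ.vec c a • Δ.mon b)

theorem bracket_smul_mon_sub_combination {a b : Fin (Δ.r + 1)} (hab : a ≠ b)
    (c : Fin (Δ.r + 1)) :
    bracket Δ.vec a b • (Δ.mon c - Δ.combination a b c) = Δ.trinomial a b c := by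
  have bracket_ne := Δ.bracket_vec_ne_zero hab
  rw [combination, trinomial, threeTerm, smul_sub, neg_smul, smul_neg, smul_inv_smul₀ bracket_ne]
  abel

theorem relIdeal_eq_span_X_sub_combination {a b : Fin (Δ.r + 1)} (hab : a ≠ b)
    (hlin : ∀ c, c ≠ a → c ≠ b → ∑ j, Δ.β c j = 1) :
    Δ.relIdeal = Ideal.span
      ((fun v ↦ X v - Δ.combination a b v.block) '' {v : Δ.Vars | v.block = a ∨ v.block = b}ᶜ) := by
  apply le_antisymm
  · refine Δ.relIdeal_le_of_trinomial_mem hab fun c hca hcb ↦ ?_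
    rw [← Δ.bracket_smul_mon_sub_combination hab, Δ.mon_eq_X (hlin c hca hcb) ⟨0, Δ.one_le_n c⟩]
    exact Submodule.smul_of_tower_mem _ _
      (Ideal.subset_span ⟨Δ.var c _, not_or.2 ⟨hca, hcb⟩, rfl⟩)
  · rw [Ideal.span_le]
    rintro _ ⟨v, hv, rfl⟩
    obtain ⟨c, j, rfl⟩ := exists_eq_var v
    obtain ⟨hca, hcb⟩ : c ≠ a ∧ c ≠ b := not_or.1 hv
    suffices Δ.mon c - Δ.combination a b c ∈ Δ.relIdeal.restrictScalars k by
      rwa [Δ.mon_eq_X (hlin c hca hcb) j] at this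
    rw [← Submodule.smul_mem_iff_of_isUnit _ (Δ.bracket_vec_ne_zero hab).isUnit,
      Δ.bracket_smul_mon_sub_combination hab]
    exact Δ.trinomial_mem_relIdeal a b c

theorem nonempty_ring_algEquiv_mvPolynomial {a b : Fin (Δ.r + 1)} (hab : a ≠ b)
    (hlin : ∀ c, c ≠ a → c ≠ b → ∑ j, Δ.β c j = 1) :
    Nonempty (Δ.Ring ≃ₐ[k] MvPolynomial {v : Δ.Vars | v.block = a ∨ v.block = b} k) := by
  unfold TrinomialData.Ring
  rw [Δ.relIdeal_eq_span_X_sub_combination hab hlin]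
  refine nonempty_quotient_span_X_sub_algEquiv _ fun v _ ↦ ?_
  exact Subalgebra.smul_mem _ (add_mem
    (Subalgebra.smul_mem _ (Δ.mon_mem_supported fun _ ↦ Or.inl rfl) _)
    (Subalgebra.smul_mem _ (Δ.mon_mem_supported fun _ ↦ Or.inr rfl) _)) _

end TrinomialData

theorem trinomialData_smooth_iff_polynomial_general (Δ : TrinomialData k)
    [Algebra.FormallySmooth k Δ.Ring] :
    ∃ N : ℕ, Nonempty (Δ.Ring ≃ₐ[k] MvPolynomial (Fin N) k) := by
  obtain ⟨a, b, hab, hlin⟩ := Δ.exists_pair_forall_sum_β_eq_one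
  obtain ⟨e⟩ := Δ.nonempty_ring_algEquiv_mvPolynomial hab hlin
  exact ⟨_, ⟨e.trans (renameEquiv k (Finite.equivFin _))⟩⟩

/-- Over an algebraically closed field `k`, if `k[Δ]` is a smooth `k`-algebra
for trinomial data `Δ`, then `k[Δ]` is a polynomial ring over `k`. -/
theorem trinomialData_smooth_iff_polynomial [IsAlgClosed k] (Δ : TrinomialData k)
    (hsm : Algebra.Smooth k Δ.Ring) :
    ∃ N : ℕ, Nonempty (Δ.Ring ≃ₐ[k] MvPolynomial (Fin N) k) := by
  have := hsm.formallySmooth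
  exact trinomialData_smooth_iff_polynomial_general Δ
end

section
/- Assume the field k is algebraically closed. Let B be a unirational unique factorization domain of finite transcendence degree n ≥ 1 over k. If B admits an effective unmixed Z^{n−1}-grading with B_0 = k, then there exist reduced trinomial data Δ over k and m ∈ N such that B is isomorphic as a k-algebra to the polynomial ring in m variables over k[Δ]. -/
open MvPolynomial

variable {k : Type*} [Field k]

/-!
The degree-zero homogeneous fractions of `B` form a field `K₀` of transcendence degree one over `k`,
because the grading group has rank `n - 1`. Since `B` is unirational, Lüroth's theorem gives
`K₀ = k(a / b)` with `a`, `b` homogeneous of the same degree and without common factor.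

The pencil of all `a - λ b`, together with `b`, controls the factorisation of homogeneous elements:
a quotient of two homogeneous elements of the same degree is a scalar times a quotient of two
products of equally many members of the pencil, and distinct members have no common prime factor.
Comparing multiplicities, only finitely many members are not prime, and only finitely many
homogeneous primes divide no member. `B` is generated by the latter primes and the prime factors
of finitely many members, including all the non-prime ones. Any three members are linearly
dependent, which yields the trinomial relations, and the monomials irreducible with respect to these
relations are linearly independent, so there are no others.
-/

/-! ### Graded domains -/

section GradedDomain

open DirectSum

variable {ι σ B : Type*} [SetLike σ B]

section Semiring

variable [DecidableEq ι] [AddMonoid ι] [Semiring B] [AddSubmonoidClass σ B] (𝒜 : ι → σ)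
  [GradedRing 𝒜]

theorem coe_decompose_mul_of_uniqueAdd {f g : B} {i j : ι}
    [∀ (i) (x : 𝒜 i), Decidable (x ≠ 0)]
    (hi : i ∈ (decompose 𝒜 f).support) (hj : j ∈ (decompose 𝒜 g).support)
    (hij : UniqueAdd (decompose 𝒜 f).support (decompose 𝒜 g).support i j) :
    (decompose 𝒜 (f * g) (i + j) : B) = decompose 𝒜 f i * decompose 𝒜 g j := by
  rw [decompose_mul, coe_mul_apply, Finset.sum_eq_single_of_mem (i, j)]
  · exact Finset.mem_filter.mpr ⟨Finset.mk_mem_product hi hj, rfl⟩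
  · rintro ⟨i', j'⟩ hmem hne
    obtain ⟨hprod, hsum⟩ := Finset.mem_filter.mp hmem
    obtain ⟨hi', hj'⟩ := Finset.mem_product.mp hprod
    obtain ⟨rfl, rfl⟩ := hij hi' hj' hsum
    exact absurd rfl hne

theorem add_eq_of_uniqueAdd_of_mul_mem [NoZeroDivisors B] {f g : B} {h i j : ι}
    [∀ (i) (x : 𝒜 i), Decidable (x ≠ 0)] (hfg : f * g ∈ 𝒜 h)
    (hi : i ∈ (decompose 𝒜 f).support) (hj : j ∈ (decompose 𝒜 g).support)
    (hij : UniqueAdd (decompose 𝒜 f).support (decompose 𝒜 g).support i j) : i + j = h := by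
  by_contra hne
  have hzero := coe_decompose_mul_of_uniqueAdd 𝒜 hi hj hij
  rw [decompose_of_mem_ne 𝒜 hfg (Ne.symm hne)] at hzero
  rw [DFinsupp.mem_support_iff] at hi hj
  exact mul_ne_zero (fun h0 => hi (Subtype.ext h0)) (fun h0 => hj (Subtype.ext h0)) hzero.symm

theorem mem_of_support_decompose_eq_singleton {f : B} {i : ι}
    [∀ (i) (x : 𝒜 i), Decidable (x ≠ 0)] (hf : (decompose 𝒜 f).support = {i}) : f ∈ 𝒜 i := by
  rw [← sum_support_decompose 𝒜 f, hf, Finset.sum_singleton]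
  exact SetLike.coe_mem _

theorem exists_mem_mem_of_mul_mem [TwoUniqueSums ι] [NoZeroDivisors B] {f g : B} {h : ι}
    (hfg : f * g ∈ 𝒜 h) (hne : f * g ≠ 0) : ∃ i j, i + j = h ∧ f ∈ 𝒜 i ∧ g ∈ 𝒜 j := by
  classical
  have support_card_pos : ∀ {b : B}, b ≠ 0 → 0 < (decompose 𝒜 b).support.card := fun {b} hb => by
    rw [Finset.card_pos, Finset.nonempty_iff_ne_empty, Ne, DFinsupp.support_eq_empty,
      ← decompose_zero 𝒜]
    exact (decompose 𝒜).injective.ne hb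
  have hF := support_card_pos (left_ne_zero_of_mul hne)
  have hG := support_card_pos (right_ne_zero_of_mul hne)
  have hcard : ¬ 1 < (decompose 𝒜 f).support.card * (decompose 𝒜 g).support.card := by
    intro hlt
    obtain ⟨p, hp, q, hq, hpq, hpu, hqu⟩ := TwoUniqueSums.uniqueAdd_of_one_lt_card hlt
    obtain ⟨hp₁, hp₂⟩ := Finset.mem_product.mp hp
    obtain ⟨hq₁, hq₂⟩ := Finset.mem_product.mp hq
    have hsum := (add_eq_of_uniqueAdd_of_mul_mem 𝒜 hfg hq₁ hq₂ hqu).trans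
      (add_eq_of_uniqueAdd_of_mul_mem 𝒜 hfg hp₁ hp₂ hpu).symm
    obtain ⟨h₁, h₂⟩ := hpu hq₁ hq₂ hsum
    exact hpq (Prod.ext h₁.symm h₂.symm)
  obtain ⟨i, hi⟩ := Finset.card_eq_one.mp (show (decompose 𝒜 f).support.card = 1 by nlinarith)
  obtain ⟨j, hj⟩ := Finset.card_eq_one.mp (show (decompose 𝒜 g).support.card = 1 by nlinarith)
  have hf := mem_of_support_decompose_eq_singleton 𝒜 hi
  have hg := mem_of_support_decompose_eq_singleton 𝒜 hj
  exact ⟨i, j, degree_eq_of_mem_mem 𝒜 (SetLike.mul_mem_graded hf hg) hfg hne, hf, hg⟩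

variable {𝒜}

theorem sum_filter_degree_eq_zero {J : Type*} {s : Finset J} {f : J → B} {deg : J → ι}
    (hf : ∀ j ∈ s, f j ∈ 𝒜 (deg j)) (hsum : ∑ j ∈ s, f j = 0) (d : ι) :
    ∑ j ∈ s with deg j = d, f j = 0 := by
  have hcomp : (decompose 𝒜 (∑ j ∈ s, f j) d : B) = ∑ j ∈ s with deg j = d, f j := by
    rw [decompose_sum, DFinsupp.finsetSum_apply, AddSubmonoidClass.coe_finsetSum,
      Finset.sum_filter]
    refine Finset.sum_congr rfl fun j hj => ?_
    split_ifs with hd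
    · exact decompose_of_mem_same 𝒜 (hd ▸ hf j hj)
    · exact decompose_of_mem_ne 𝒜 (hf j hj) hd
  rw [← hcomp, hsum, decompose_zero, DirectSum.zero_apply, ZeroMemClass.coe_zero]

theorem isHomogeneousElem_of_dvd [TwoUniqueSums ι] [NoZeroDivisors B] {f g : B}
    (hg : SetLike.IsHomogeneousElem 𝒜 g) (hne : g ≠ 0) (hfg : f ∣ g) :
    SetLike.IsHomogeneousElem 𝒜 f := by
  obtain ⟨h, hg⟩ := hg
  obtain ⟨c, rfl⟩ := hfg
  obtain ⟨i, -, -, hi, -⟩ := exists_mem_mem_of_mul_mem 𝒜 hg hne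
  exact ⟨i, hi⟩

end Semiring

theorem finsupp_prod_pow_mem_graded {J : Type*} [AddCommMonoid ι] [CommSemiring B]
    {𝒜 : ι → σ} [SetLike.GradedMonoid 𝒜] {p : J → B} {deg : J → ι} (hp : ∀ j, p j ∈ 𝒜 (deg j))
    (e : J →₀ ℕ) : (e.prod fun j n => p j ^ n) ∈ 𝒜 (Finsupp.linearCombination ℕ deg e) :=
  SetLike.prod_pow_mem_graded 𝒜 deg p e fun j _ => hp j

end GradedDomain

section GradedAlgebra

variable {ι B : Type*} [AddCommGroup ι] [DecidableEq ι] [CommRing B] [Algebra k B]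
  {𝒜 : ι → Submodule k B} [GradedAlgebra 𝒜]

theorem adjoin_isHomogeneousElem_eq_top :
    Algebra.adjoin k {b | SetLike.IsHomogeneousElem 𝒜 b} = ⊤ := by
  classical
  rw [eq_top_iff]
  rintro b -
  rw [← DirectSum.sum_support_decompose 𝒜 b]
  exact sum_mem fun i _ => Algebra.subset_adjoin ⟨i, SetLike.coe_mem _⟩

theorem exists_algebraMap_eq_of_isUnit [IsDomain B] [TwoUniqueSums ι]
    (hunmixed : ∀ g : ι, 𝒜 g ≠ ⊥ → 𝒜 (-g) ≠ ⊥ → g = 0)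
    (hzero : ∀ b ∈ 𝒜 0, ∃ c : k, b = algebraMap k B c) {u : B} (hu : IsUnit u) :
    ∃ c : k, u = algebraMap k B c := by
  obtain ⟨v, huv⟩ := hu.exists_right_inv
  obtain ⟨i, j, hij, hi, hj⟩ := exists_mem_mem_of_mul_mem 𝒜
    (huv ▸ SetLike.one_mem_graded 𝒜 : u * v ∈ 𝒜 0) (huv ▸ one_ne_zero)
  obtain rfl : j = -i := eq_neg_of_add_eq_zero_right hij
  have hv : v ≠ 0 := right_ne_zero_of_mul_eq_one huv
  obtain rfl : i = 0 := hunmixed i ((𝒜 i).ne_bot_iff.mpr ⟨u, hi, hu.ne_zero⟩)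
    ((𝒜 (-i)).ne_bot_iff.mpr ⟨v, hj, hv⟩)
  exact hzero u hi

end GradedAlgebra

theorem linearIndependent_int_of_nat {J M : Type*} [AddCommGroup M] {v : J → M}
    (hv : LinearIndependent ℕ v) : LinearIndependent ℤ v := by
  rw [linearIndependent_iff]
  intro l hl
  let pos : J →₀ ℕ := l.mapRange Int.toNat rfl
  let neg : J →₀ ℕ := l.mapRange (fun z => (-z).toNat) rfl
  have hcast : ∀ e : J →₀ ℕ, Finsupp.linearCombination ℕ v e =
      Finsupp.linearCombination ℤ v (e.mapRange Nat.cast rfl) := fun e => by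
    simp [Finsupp.linearCombination_apply, Finsupp.sum_mapRange_index]
  have hsplit : l = pos.mapRange Nat.cast rfl - neg.mapRange Nat.cast rfl := by
    ext j
    simp only [pos, neg, Finsupp.sub_apply, Finsupp.mapRange_apply]
    omega
  have hpos_neg : pos = neg := hv <| by
    rw [hcast, hcast, ← sub_eq_zero, ← map_sub, ← hsplit, hl]
  rw [hsplit, hpos_neg, sub_self]

/-! ### Subfields of rational function fields -/

section Luroth

theorem range_le_of_isAlgebraic_adjoin {E F L : Type*} [Field E] [Field F] [Field L] [Algebra k E]
    [Algebra k F] [Algebra k L] (O : Subalgebra k F) [IsIntegrallyClosed O] [IsFractionRing O F]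
    (θ : O →ₐ[k] L) [IsLocalHom θ] (j : E →ₐ[k] F) {u : E} (huO : j u ∈ O)
    (hu : Transcendental k (θ ⟨j u, huO⟩)) [Algebra.IsAlgebraic (Algebra.adjoin k {u}) E] :
    j.range ≤ O := by
  rintro _ ⟨e, rfl⟩
  have hadjoin : Algebra.adjoin k {u} ≤ O.comap j :=
    Algebra.adjoin_le (Set.singleton_subset_iff.mpr huO)
  let jO : Algebra.adjoin k {u} →ₐ[k] O :=
    (j.comp (Algebra.adjoin k {u}).val).codRestrict O fun z => hadjoin z.2
  obtain ⟨y, hy, hint⟩ := (Algebra.IsAlgebraic.isAlgebraic (R := Algebra.adjoin k {u}) e)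
    |>.exists_integral_multiple
  have hjy : θ (jO y) ≠ 0 := by
    obtain ⟨_, hyu⟩ := y
    obtain ⟨f, rfl : Polynomial.aeval u f = _⟩ :=
      (Algebra.adjoin_singleton_eq_range_aeval k u).le hyu
    have hf : f ≠ 0 := by
      rintro rfl
      exact hy (Subtype.ext (map_zero _))
    have heval : jO ⟨Polynomial.aeval u f, hyu⟩ = Polynomial.aeval ⟨j u, huO⟩ f :=
      Subtype.ext <| (Polynomial.aeval_algHom_apply j u f).symm.trans
        (Polynomial.aeval_algHom_apply O.val ⟨j u, huO⟩ f)
    rw [heval, ← Polynomial.aeval_algHom_apply]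
    exact fun h0 => hu ⟨f, hf, h0⟩
  have hmul : j y * j e ∈ O := by
    have hint' : IsIntegral O (j (y • e)) :=
      hint.map_of_comp_eq (jO : Algebra.adjoin k {u} →+* O) (j : E →+* F) rfl
    obtain ⟨z, hz⟩ := IsIntegrallyClosed.isIntegral_iff.mp hint'
    rw [← map_mul]
    exact hz ▸ z.2
  obtain ⟨z, hz⟩ := (isUnit_of_map_unit θ _ (isUnit_iff_ne_zero.mpr hjy)).exists_left_inv
  have hz' : (z : F) * j y = 1 := congrArg Subtype.val hz
  change j e ∈ O
  simpa only [← mul_assoc, hz', one_mul] using O.mul_mem z.2 hmul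

theorem exists_algHom_polynomial_ne_C_mul [Infinite k] {σ : Type*} {P Q : MvPolynomial σ k}
    (hQ : Q ≠ 0) (hPQ : ∀ c, P ≠ C c * Q) :
    ∃ ev : MvPolynomial σ k →ₐ[k] Polynomial k,
      ev Q ≠ 0 ∧ ∀ c, ev P ≠ Polynomial.C c * ev Q := by
  obtain ⟨p, hp⟩ : ∃ p, eval p Q ≠ 0 := by
    by_contra! h
    exact hQ (MvPolynomial.funext (by simpa using h))
  set c₀ := eval p P / eval p Q
  obtain ⟨q, hq⟩ : ∃ q, eval q (P - C c₀ * Q) ≠ 0 := by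
    by_contra! h
    exact hPQ c₀ (sub_eq_zero.mp (MvPolynomial.funext (by simpa using h)))
  -- restriction to the line through `p` and `q`
  let ev : MvPolynomial σ k →ₐ[k] Polynomial k :=
    aeval fun i => Polynomial.C (p i) + Polynomial.X * Polynomial.C (q i - p i)
  have ev_zero : ∀ f, (ev f).eval 0 = eval p f := fun f => by
    have : (Polynomial.evalRingHom 0).comp (ev : MvPolynomial σ k →+* Polynomial k) = eval p := by
      apply MvPolynomial.ringHom_ext <;> simp [ev]
    exact DFunLike.congr_fun this f
  have ev_one : ∀ f, (ev f).eval 1 = eval q f := fun f => by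
    have : (Polynomial.evalRingHom 1).comp (ev : MvPolynomial σ k →+* Polynomial k) = eval q := by
      apply MvPolynomial.ringHom_ext <;> simp [ev]
    exact DFunLike.congr_fun this f
  refine ⟨ev, fun h0 => hp (by rw [← ev_zero, h0, Polynomial.eval_zero]), fun c hc => hq ?_⟩
  have h0 := congrArg (Polynomial.eval 0) hc
  have h1 := congrArg (Polynomial.eval 1) hc
  simp only [Polynomial.eval_mul, Polynomial.eval_C, ev_zero, ev_one] at h0 h1
  have hc₀ : c₀ = c := by rw [div_eq_iff hp, h0]
  simp [h1, hc₀]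

theorem exists_subalgebra_extension {A L : Type*} (F : Type*) [CommRing A] [IsDomain A]
    [IsIntegrallyClosed A] [Field F] [Field L] [Algebra k A] [Algebra A F] [IsFractionRing A F]
    [Algebra k F] [IsScalarTower k A F] [Algebra k L] (ev : A →ₐ[k] L) :
    ∃ O : Subalgebra k F, IsIntegrallyClosed O ∧ IsFractionRing O F ∧
      ∃ θ : O →ₐ[k] L, IsLocalHom θ ∧ ∀ a b, ev b ≠ 0 →
        ∃ z : O, (z : F) = algebraMap A F a / algebraMap A F b ∧ θ z = ev a / ev b := by
  have : (RingHom.ker ev).IsPrime := RingHom.ker_isPrime ev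
  set M := (RingHom.ker ev).primeCompl
  have hM : M ≤ nonZeroDivisors A := Ideal.primeCompl_le_nonZeroDivisors _
  let O := Localization.subalgebra.ofField F M hM
  let θ : O →ₐ[k] L := IsLocalization.liftAlgHom (M := M) (f := ev)
    fun y => isUnit_iff_ne_zero.mpr y.2
  have hθ : ∀ a s, θ (IsLocalization.mk' O a s) = ev a / ev s := fun a s =>
    (IsLocalization.lift_mk'_spec _ _ _ _).mpr (mul_div_cancel₀ _ s.2).symm
  refine ⟨O.restrictScalars k, isIntegrallyClosed_of_isLocalization O M hM,
    Localization.subalgebra.isFractionRing_ofField F M hM, θ, ⟨fun z hz => ?_⟩, fun a b hb => ?_⟩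
  · obtain ⟨a, s, rfl⟩ := IsLocalization.exists_mk'_eq (S := O) M z
    have ha : ev a ≠ 0 := fun h0 => hz.ne_zero ((hθ a s).trans (by rw [h0, zero_div]))
    exact (IsLocalization.AtPrime.isUnit_mk'_iff O (RingHom.ker ev) a s).mpr ha
  · refine ⟨IsLocalization.mk' O a (⟨b, hb⟩ : M), ?_, hθ _ _⟩
    rw [eq_div_iff (IsFractionRing.to_map_ne_zero_of_mem_nonZeroDivisors (hM hb))]
    exact congrArg Subtype.val (IsLocalization.mk'_spec O a (⟨b, hb⟩ : M))

theorem nonempty_algHom_ratFunc [Infinite k] {σ E : Type*} [Field E] [Algebra k E]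
    (j : E →ₐ[k] FractionRing (MvPolynomial σ k)) {u : E} (hu : u ∉ Set.range (algebraMap k E))
    [Algebra.IsAlgebraic (Algebra.adjoin k {u}) E] : Nonempty (E →ₐ[k] RatFunc k) := by
  obtain ⟨P, Q, hQ, hPQ⟩ := IsFractionRing.div_surjective (A := MvPolynomial σ k) (j u)
  have hQ : Q ≠ 0 := nonZeroDivisors.ne_zero hQ
  have hne : ∀ c, P ≠ C c * Q := by
    rintro c rfl
    refine hu ⟨c, j.injective ?_⟩
    change j _ = j _
    rw [← hPQ, map_mul, mul_div_cancel_right₀ _ (by simpa using hQ), j.commutes]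
    rfl
  obtain ⟨ev, hevQ, hevP⟩ := exists_algHom_polynomial_ne_C_mul hQ hne
  let ev' : MvPolynomial σ k →ₐ[k] RatFunc k :=
    (IsScalarTower.toAlgHom k (Polynomial k) (RatFunc k)).comp ev
  obtain ⟨O, _, _, θ, _, hθ⟩ :=
    exists_subalgebra_extension (FractionRing (MvPolynomial σ k)) ev'
  have hevQ' : ev' Q ≠ 0 := by simpa [ev'] using hevQ
  obtain ⟨z, hz, hθz⟩ := hθ P Q hevQ'
  have hju : j u ∈ O := hPQ ▸ hz ▸ z.2
  have htr : Transcendental k (θ ⟨j u, hju⟩) := by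
    refine RatFunc.transcendental_of_ne_C _ ?_
    rintro ⟨c, hc⟩
    rw [show (⟨j u, hju⟩ : O) = z from Subtype.ext (hPQ.symm.trans hz.symm), hθz,
      div_eq_iff hevQ'] at hc
    exact hevP c (RatFunc.algebraMap_injective k (by simpa [ev'] using hc))
  have hrange := range_le_of_isAlgebraic_adjoin O θ j hju htr
  exact ⟨θ.comp (j.codRestrict O fun e => hrange ⟨e, rfl⟩)⟩

theorem exists_adjoin_simple_eq_top_of_algHom_ratFunc {E : Type*} [Field E] [Algebra k E]
    (ψ : E →ₐ[k] RatFunc k) : ∃ t : E, IntermediateField.adjoin k {t} = ⊤ := by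
  obtain ⟨t, ht⟩ : RatFunc.Luroth.generator ψ.fieldRange ∈ ψ.fieldRange :=
    RatFunc.Luroth.generator_mem
  refine ⟨t, IntermediateField.map_injective ψ ?_⟩
  rw [IntermediateField.adjoin_map, Set.image_singleton, ← AlgHom.fieldRange_eq_map,
    RatFunc.Luroth.eq_adjoin_generator (E := ψ.fieldRange), ← ht]
  rfl

end Luroth

/-! ### Homogeneous fractions of degree zero -/

theorem exists_linearIndependent_fin_finrank_of_span_eq_top {R M : Type*} [CommRing R] [IsDomain R]
    [AddCommGroup M] [Module R M] [Module.Finite R M] {S : Set M}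
    (hS : Submodule.span R S = ⊤) :
    ∃ v : Fin (Module.finrank R M) → M, LinearIndependent R v ∧ ∀ i, v i ∈ S := by
  let K := FractionRing R
  let f := LocalizedModule.mkLinearMap (nonZeroDivisors R) M
  have hspan : Submodule.span K (f '' S) = ⊤ :=
    span_eq_top_of_isLocalizedModule K (nonZeroDivisors R) f hS
  have hrank : Module.finrank K (Submodule.span K (f '' S)) = Module.finrank R M := by
    rw [hspan, finrank_top, IsLocalization.finrank_eq K (nonZeroDivisors R) le_rfl,
      IsLocalizedModule.finrank_eq (nonZeroDivisors R) f le_rfl]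
  have : Module.Finite K (LocalizedModule (nonZeroDivisors R) M) :=
    .of_isLocalizedModule (nonZeroDivisors R) f
  obtain ⟨w, hwS, -, hw⟩ := Submodule.exists_fun_fin_finrank_span_eq K (f '' S)
  choose v hvS hvw using hwS
  obtain rfl : f ∘ v = w := funext hvw
  have hv : LinearIndependent R v := LinearIndependent.of_comp f (hw.restrict_scalars' R)
  rw [← hrank]
  exact ⟨v, hv, hvS⟩

section DegreeZeroFractions

universe v w

variable {ι : Type v} {B : Type w} [AddCommGroup ι] [DecidableEq ι] [CommRing B] [IsDomain B]
  [Algebra k B] (𝒜 : ι → Submodule k B) [GradedAlgebra 𝒜]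

/-- The degree-zero part of the homogeneous localization of `B`: the subfield of `Frac B` formed
by the quotients `a / b` of homogeneous elements of the same degree. -/
noncomputable def degreeZeroFractions : IntermediateField k (FractionRing B) where
  carrier := {z | ∃ g, ∃ a ∈ 𝒜 g, ∃ b ∈ 𝒜 g, b ≠ 0 ∧
    z = algebraMap B (FractionRing B) a / algebraMap B (FractionRing B) b}
  mul_mem' := by
    rintro _ _ ⟨g, a, ha, b, hb, hb0, rfl⟩ ⟨g', a', ha', b', hb', hb0', rfl⟩
    refine ⟨g + g', a * a', SetLike.mul_mem_graded ha ha', b * b', SetLike.mul_mem_graded hb hb',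
      mul_ne_zero hb0 hb0', ?_⟩
    rw [map_mul, map_mul, div_mul_div_comm]
  add_mem' := by
    rintro _ _ ⟨g, a, ha, b, hb, hb0, rfl⟩ ⟨g', a', ha', b', hb', hb0', rfl⟩
    refine ⟨g + g', a * b' + b * a', add_mem (SetLike.mul_mem_graded ha hb')
      (SetLike.mul_mem_graded hb ha'), b * b', SetLike.mul_mem_graded hb hb',
      mul_ne_zero hb0 hb0', ?_⟩
    rw [map_add, map_mul, map_mul, map_mul, div_add_div _ _ (by simpa using hb0)
      (by simpa using hb0')]
  algebraMap_mem' c := by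
    refine ⟨0, algebraMap k B c, SetLike.algebraMap_mem_graded 𝒜 c, 1, SetLike.one_mem_graded 𝒜,
      one_ne_zero, ?_⟩
    rw [map_one, div_one, ← IsScalarTower.algebraMap_apply]
  inv_mem' := by
    rintro _ ⟨g, a, ha, b, hb, -, rfl⟩
    obtain rfl | ha0 := eq_or_ne a 0
    · exact ⟨0, 0, zero_mem _, 1, SetLike.one_mem_graded 𝒜, one_ne_zero, by simp⟩
    · exact ⟨g, b, hb, a, ha, ha0, inv_div _ _⟩

variable {𝒜}

theorem mem_degreeZeroFractions {z : FractionRing B} :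
    z ∈ degreeZeroFractions 𝒜 ↔ ∃ g, ∃ a ∈ 𝒜 g, ∃ b ∈ 𝒜 g, b ≠ 0 ∧
      z = algebraMap B (FractionRing B) a / algebraMap B (FractionRing B) b :=
  Iff.rfl

theorem exists_common_homogeneous_denominator {J : Type*} (s : Finset J)
    (c : J → degreeZeroFractions 𝒜) :
    ∃ δ, ∃ D ∈ 𝒜 δ, D ≠ 0 ∧ ∀ j ∈ s, ∃ a ∈ 𝒜 δ,
      (c j : FractionRing B) * algebraMap B (FractionRing B) D =
        algebraMap B (FractionRing B) a := by
  classical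
  induction s using Finset.induction_on with
  | empty => exact ⟨0, 1, SetLike.one_mem_graded 𝒜, one_ne_zero, by simp⟩
  | insert i s _ ih =>
    obtain ⟨δ, D, hD, hD0, h⟩ := ih
    obtain ⟨g, a, ha, b, hb, hb0, hc⟩ := mem_degreeZeroFractions.mp (c i).2
    refine ⟨δ + g, D * b, SetLike.mul_mem_graded hD hb, mul_ne_zero hD0 hb0, ?_⟩
    rw [Finset.forall_mem_insert]
    constructor
    · refine ⟨D * a, SetLike.mul_mem_graded hD ha, ?_⟩
      have : algebraMap B (FractionRing B) b ≠ 0 := by simpa using hb0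
      rw [hc, map_mul, map_mul]
      field_simp
    · intro j hj
      obtain ⟨a', ha', hcj⟩ := h j hj
      refine ⟨a' * b, SetLike.mul_mem_graded ha' hb, ?_⟩
      rw [map_mul, map_mul, ← hcj, mul_assoc]

theorem linearIndependent_degreeZeroFractions {J : Type*} {y : J → B} {deg : J → ι}
    (hdeg : Function.Injective deg) (hy : ∀ j, y j ∈ 𝒜 (deg j)) (hy0 : ∀ j, y j ≠ 0) :
    LinearIndependent (degreeZeroFractions 𝒜) fun j => algebraMap B (FractionRing B) (y j) := by
  rw [linearIndependent_iff']
  intro s c hc i hi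
  obtain ⟨δ, D, -, hD0, h⟩ := exists_common_homogeneous_denominator s c
  choose! a ha haD using h
  have hsum : ∑ j ∈ s, a j * y j = 0 := by
    apply IsFractionRing.injective B (FractionRing B)
    calc algebraMap B (FractionRing B) (∑ j ∈ s, a j * y j)
        = ∑ j ∈ s,
            algebraMap B (FractionRing B) D * (c j • algebraMap B (FractionRing B) (y j)) := by
          rw [map_sum]
          refine Finset.sum_congr rfl fun j hj => ?_
          rw [map_mul, ← haD j hj, IntermediateField.smul_def, smul_eq_mul]
          ring
      _ = algebraMap B (FractionRing B) 0 := by rw [← Finset.mul_sum, hc, mul_zero, map_zero]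
  have hcomp := sum_filter_degree_eq_zero (𝒜 := 𝒜) (deg := fun j => δ + deg j)
    (fun j hj => SetLike.mul_mem_graded (ha j hj) (hy j)) hsum (δ + deg i)
  have hfilter : {j ∈ s | δ + deg j = δ + deg i} = {i} := by
    ext j
    rw [Finset.mem_filter, Finset.mem_singleton, add_right_inj, hdeg.eq_iff]
    exact and_iff_right_of_imp fun h => h ▸ hi
  rw [hfilter, Finset.sum_singleton] at hcomp
  have hcD := haD i hi
  rw [(mul_eq_zero.mp hcomp).resolve_right (hy0 i), map_zero] at hcD
  exact Subtype.ext ((mul_eq_zero.mp hcD).resolve_right (by simpa using hD0))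

theorem algebraicIndependent_degreeZeroFractions {J : Type*} {y : J → B} {deg : J → ι}
    (hdeg : LinearIndependent ℕ deg) (hy : ∀ j, y j ∈ 𝒜 (deg j)) (hy0 : ∀ j, y j ≠ 0) :
    AlgebraicIndependent (degreeZeroFractions 𝒜) fun j => algebraMap B (FractionRing B) (y j) := by
  have hmonomials := linearIndependent_degreeZeroFractions (𝒜 := 𝒜) hdeg
    (fun e => finsupp_prod_pow_mem_graded hy e)
    (fun e => Finset.prod_ne_zero_iff.mpr fun j _ => pow_ne_zero _ (hy0 j))
  refine LinearMap.injective_of_linearIndependent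
    (f := (aeval fun j => algebraMap B (FractionRing B) (y j)).toLinearMap)
    (basisMonomials J (degreeZeroFractions 𝒜)).span_eq ?_
  have heval : ((aeval fun j => algebraMap B (FractionRing B) (y j)).toLinearMap ∘
      basisMonomials J (degreeZeroFractions 𝒜)) =
      fun e : J →₀ ℕ => algebraMap B (FractionRing B) (e.prod fun j n => y j ^ n) := by
    funext e
    simp [aeval_monomial, Finsupp.prod]
  rw [heval]
  exact hmonomials

theorem trdeg_degreeZeroFractions_add_finrank_le [Module.Finite ℤ ι]
    (heff : AddSubgroup.closure {g : ι | 𝒜 g ≠ ⊥} = ⊤) :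
    Algebra.trdeg k (degreeZeroFractions 𝒜) + Module.finrank ℤ ι ≤ Algebra.trdeg k B := by
  have hspan : Submodule.span ℤ {g : ι | 𝒜 g ≠ ⊥} = ⊤ := by
    rw [← Submodule.toAddSubgroup_inj, Submodule.span_int_eq_addSubgroupClosure, heff]
    rfl
  obtain ⟨deg, hdeg, hne⟩ := exists_linearIndependent_fin_finrank_of_span_eq_top hspan
  choose y hy hy0 using fun j => Submodule.exists_mem_ne_zero_of_ne_bot (hne j)
  have hind := algebraicIndependent_degreeZeroFractions (hdeg.restrict_scalars' ℕ) hy hy0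
  have hle := hind.lift_cardinalMk_le_trdeg
  have := IsLocalization.isAlgebraic (FractionRing B) (nonZeroDivisors B)
  have htrdeg : Algebra.trdeg k (FractionRing B) = Algebra.trdeg k B := by
    rw [← trdeg_add_eq k B, trdeg_eq_zero (R := B), add_zero]
  rw [← htrdeg, ← trdeg_add_eq k (degreeZeroFractions 𝒜) (A := FractionRing B)]
  gcongr
  simpa using hle

theorem exists_eq_smul_of_degreeZeroFractions_eq_bot (hbot : degreeZeroFractions 𝒜 = ⊥) {g : ι}
    {a b : B} (ha : a ∈ 𝒜 g) (hb : b ∈ 𝒜 g) (hb0 : b ≠ 0) : ∃ c : k, a = c • b := by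
  obtain ⟨c, hc⟩ := IntermediateField.mem_bot.mp
    (hbot.le (mem_degreeZeroFractions.mpr ⟨g, a, ha, b, hb, hb0, rfl⟩))
  refine ⟨c, IsFractionRing.injective B (FractionRing B) ?_⟩
  rw [eq_div_iff (by simpa using hb0)] at hc
  rw [Algebra.smul_def, map_mul, ← IsScalarTower.algebraMap_apply, hc]

theorem lift_trdeg_le_rank_of_degreeZeroFractions_eq_bot (hbot : degreeZeroFractions 𝒜 = ⊥) :
    Cardinal.lift.{v} (Algebra.trdeg k B) ≤ Cardinal.lift.{w} (Module.rank ℤ ι) := by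
  have : Algebra.IsAlgebraic (Algebra.adjoin k {b | SetLike.IsHomogeneousElem 𝒜 b}) B :=
    ⟨fun b => isAlgebraic_algebraMap (⟨b, adjoin_isHomogeneousElem_eq_top.ge trivial⟩ :
      Algebra.adjoin k {b | SetLike.IsHomogeneousElem 𝒜 b})⟩
  obtain ⟨t, hts, ht⟩ := exists_isTranscendenceBasis_subset (R := k)
    {b | SetLike.IsHomogeneousElem 𝒜 b}
  choose deg hdeg using fun b : t => hts b.2
  have hind : LinearIndependent ℕ deg := by
    intro e e' hee
    have hmem' := finsupp_prod_pow_mem_graded hdeg e'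
    rw [← hee] at hmem'
    obtain ⟨c, hc⟩ := exists_eq_smul_of_degreeZeroFractions_eq_bot hbot
      (finsupp_prod_pow_mem_graded hdeg e) hmem'
      (Finset.prod_ne_zero_iff.mpr fun j _ => pow_ne_zero _ (ht.1.ne_zero j))
    have hmonomial : monomial e (1 : k) = monomial e' c := ht.1 <| by
      rw [aeval_monomial, aeval_monomial, map_one, one_mul, hc, Algebra.smul_def]
    obtain ⟨h, -⟩ | ⟨h, -⟩ := (monomial_eq_monomial_iff _ _ _ _).mp hmonomial
    · exact h
    · exact absurd h one_ne_zero
  rw [← ht.cardinalMk_eq_trdeg]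
  exact (linearIndependent_int_of_nat hind).cardinal_lift_le_rank

end DegreeZeroFractions

/-! ### Multiplicities in unique factorization domains -/

section Multiplicity

variable {R : Type*} [CommMonoidWithZero R] {p : R}

theorem multiplicity_eq_zero_of_isUnit (hp : Prime p) {u : R} (hu : IsUnit u) :
    multiplicity p u = 0 :=
  multiplicity_eq_zero.mpr fun h => hp.not_isUnit (isUnit_of_dvd_unit h hu)

theorem finsupp_prod_pow_ne_zero [Nontrivial R] [NoZeroDivisors R] {J : Type*} {t : J → R}
    (ht : ∀ j, t j ≠ 0) (e : J →₀ ℕ) : (e.prod fun j n => t j ^ n) ≠ 0 :=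
  Finset.prod_ne_zero_iff.mpr fun j _ => pow_ne_zero _ (ht j)

variable [UniqueFactorizationMonoid R]

theorem multiplicity_mul_of_ne_zero (hp : Prime p) {x y : R} (hx : x ≠ 0) (hy : y ≠ 0) :
    multiplicity p (x * y) = multiplicity p x + multiplicity p y :=
  multiplicity_mul hp (.of_not_isUnit hp.not_isUnit (mul_ne_zero hx hy))

theorem multiplicity_pow_of_ne_zero (hp : Prime p) {x : R} (hx : x ≠ 0) (n : ℕ) :
    multiplicity p (x ^ n) = n * multiplicity p x :=
  FiniteMultiplicity.multiplicity_pow hp (.of_not_isUnit hp.not_isUnit hx)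

theorem multiplicity_finsupp_prod_pow (hp : Prime p) {J : Type*} {t : J → R} (ht : ∀ j, t j ≠ 0)
    (e : J →₀ ℕ) : multiplicity p (e.prod fun j n => t j ^ n) =
      e.sum fun j n => n * multiplicity p (t j) := by
  have : Nontrivial R := ⟨p, 0, hp.ne_zero⟩
  induction e using Finsupp.induction_linear with
  | zero => simp [multiplicity_eq_zero_of_isUnit hp isUnit_one]
  | add e₁ e₂ ih₁ ih₂ =>
    rw [Finsupp.prod_add_index' (by simp) (by intros; rw [pow_add]),
      Finsupp.sum_add_index' (by simp) (by intros; rw [add_mul]),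
      multiplicity_mul_of_ne_zero hp (finsupp_prod_pow_ne_zero ht _)
        (finsupp_prod_pow_ne_zero ht _), ih₁, ih₂]
  | single j n =>
    rw [Finsupp.prod_single_index (by simp), Finsupp.sum_single_index (by simp),
      multiplicity_pow_of_ne_zero hp (ht j)]

theorem multiplicity_finsupp_prod_pow_of_dvd_imp_eq (hp : Prime p) {J : Type*} {t : J → R}
    (ht : ∀ j, t j ≠ 0) {i : J} (hi : ∀ j, p ∣ t j → j = i) (e : J →₀ ℕ) :
    multiplicity p (e.prod fun j n => t j ^ n) = e i * multiplicity p (t i) := by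
  rw [multiplicity_finsupp_prod_pow hp ht]
  refine Finset.sum_eq_single i (fun j _ hj => ?_) fun h => ?_
  · exact mul_eq_zero_of_right _ (multiplicity_eq_zero.mpr (mt (hi j) hj))
  · exact mul_eq_zero_of_left (Finsupp.notMem_support_iff.mp h) _

theorem multiplicity_finsupp_prod_pow_of_not_dvd (hp : Prime p) {J : Type*} {t : J → R}
    (ht : ∀ j, t j ≠ 0) (h : ∀ j, ¬ p ∣ t j) (e : J →₀ ℕ) :
    multiplicity p (e.prod fun j n => t j ^ n) = 0 := by
  rw [multiplicity_finsupp_prod_pow hp ht]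
  exact Finset.sum_eq_zero fun j _ => mul_eq_zero_of_right _ (multiplicity_eq_zero.mpr (h j))

theorem multiplicity_self_finsupp_prod_pow {J : Type*} {t : J → R} (ht : ∀ j, Prime (t j))
    (hassoc : ∀ i j, Associated (t i) (t j) → i = j) (e : J →₀ ℕ) (i : J) :
    multiplicity (t i) (e.prod fun j n => t j ^ n) = e i := by
  rw [multiplicity_finsupp_prod_pow_of_dvd_imp_eq (ht i) (fun j => (ht j).ne_zero)
    (fun j hj => (hassoc i j ((ht i).associated_of_dvd (ht j) hj)).symm),
    multiplicity_self, mul_one]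

theorem associated_of_forall_multiplicity_eq {a b : R} (ha : a ≠ 0) (hb : b ≠ 0)
    (h : ∀ p, Prime p → multiplicity p a = multiplicity p b) : Associated a b := by
  have hemult : ∀ p, Prime p → emultiplicity p a = emultiplicity p b := fun p hp => by
    rw [(FiniteMultiplicity.of_not_isUnit hp.not_isUnit ha).emultiplicity_eq_multiplicity, h p hp,
      (FiniteMultiplicity.of_not_isUnit hp.not_isUnit hb).emultiplicity_eq_multiplicity]
  exact associated_of_dvd_dvd
    ((UniqueFactorizationMonoid.dvd_iff_emultiplicity_le ha).mpr fun p hp => (hemult p hp).le)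
    ((UniqueFactorizationMonoid.dvd_iff_emultiplicity_le hb).mpr fun p hp => (hemult p hp).ge)

theorem exists_associated_pow_of_dvd_multiplicity {q : ℕ} (hq : q ≠ 0) {b : R} (hb : b ≠ 0)
    (h : ∀ p, Prime p → q ∣ multiplicity p b) : ∃ a, Associated (a ^ q) b := by
  induction b using (wellFounded_dvdNotUnit (α := R)).induction with
  | _ b ih =>
  by_cases hu : IsUnit b
  · exact ⟨1, by rw [one_pow]; exact (associated_one_iff_isUnit.mpr hu).symm⟩
  obtain ⟨p, hirr, hpb⟩ := WfDvdMonoid.exists_irreducible_factor hu hb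
  have hp := hirr.prime
  have hle : q ≤ multiplicity p b :=
    Nat.le_of_dvd (Nat.pos_of_ne_zero (multiplicity_ne_zero.mpr hpb)) (h p hp)
  obtain ⟨c, rfl⟩ := pow_dvd_of_le_multiplicity hle
  have hc : c ≠ 0 := right_ne_zero_of_mul hb
  have hpq : p ^ q ≠ 0 := pow_ne_zero _ hp.ne_zero
  have hcq : ∀ r, Prime r → q ∣ multiplicity r c := fun r hr => by
    have hr' := h r hr
    rwa [multiplicity_mul_of_ne_zero hr hpq hc, multiplicity_pow_of_ne_zero hr hp.ne_zero,
      Nat.dvd_add_right (Dvd.intro _ rfl)] at hr'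
  obtain ⟨a, ha⟩ :=
    ih c ⟨hc, p ^ q, mt (isUnit_pow_iff hq).mp hp.not_isUnit, mul_comm _ _⟩ hc hcq
  exact ⟨p * a, by rw [mul_pow]; exact ha.mul_left _⟩

theorem associated_pow_multiplicity_of_forall_prime_dvd (hp : Prime p) {b : R} (hb : b ≠ 0)
    (h : ∀ q, Prime q → q ∣ b → Associated q p) : Associated (p ^ multiplicity p b) b := by
  have : Nontrivial R := ⟨p, 0, hp.ne_zero⟩
  refine associated_of_forall_multiplicity_eq (pow_ne_zero _ hp.ne_zero) hb fun q hq => ?_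
  rw [multiplicity_pow_of_ne_zero hq hp.ne_zero]
  by_cases hqp : Associated q p
  · have hself : multiplicity q p = 1 := by
      rw [← multiplicity_eq_of_associated_left hqp, multiplicity_self]
    rw [hself, mul_one, multiplicity_eq_of_associated_left hqp]
  · rw [multiplicity_eq_zero.mpr (mt (hq.associated_of_dvd hp) hqp),
      multiplicity_eq_zero.mpr (mt (h q hq) hqp), mul_zero]

end Multiplicity

/-! ### Pencils -/

section Pencil

variable {M : Type*} [AddCommGroup M] [Module k M]

/-- The members of the pencil spanned by `a` and `b`, indexed by the projective line `Option k`: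
the member at `some α` is `a - α b`, and the member at infinity `none` is `b`. -/
def pencil (a b : M) : Option k → M
  | none => b
  | some α => a - α • b

variable {a b : M}

theorem pencil_mem {S : Submodule k M} (ha : a ∈ S) (hb : b ∈ S) :
    ∀ l : Option k, pencil a b l ∈ S
  | none => hb
  | some α => S.sub_mem ha (S.smul_mem α hb)

theorem mem_and_mem_of_pencil_mem {S : Submodule k M} {l m : Option k} (hlm : l ≠ m)
    (hl : pencil a b l ∈ S) (hm : pencil a b m ∈ S) : a ∈ S ∧ b ∈ S := by
  have left_mem : ∀ α : k, pencil a b (some α) ∈ S → b ∈ S → a ∈ S := fun α hα hb =>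
    (S.sub_mem_iff_left (S.smul_mem α hb)).mp hα
  match l, m with
  | none, none => exact absurd rfl hlm
  | none, some β => exact ⟨left_mem β hm hl, hl⟩
  | some α, none => exact ⟨left_mem α hl hm, hm⟩
  | some α, some β =>
    have hne : β - α ≠ 0 := sub_ne_zero.mpr fun h => hlm (congrArg some h.symm)
    have hb : (β - α) • b ∈ S := by
      have hsub : pencil a b (some α) - pencil a b (some β) = (β - α) • b := by
        simp only [pencil]
        module
      exact hsub ▸ S.sub_mem hl hm
    have hb' := (S.smul_mem_iff hne).mp hb
    exact ⟨left_mem α hl hb', hb'⟩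

theorem exists_smul_add_smul_eq_pencil {l m : Option k} (hlm : l ≠ m) (n : Option k) :
    ∃ x y : k, x • pencil a b l + y • pencil a b m = pencil a b n := by
  obtain ⟨ha, hb⟩ := mem_and_mem_of_pencil_mem
    (S := Submodule.span k {pencil a b l, pencil a b m}) hlm
    (Submodule.subset_span (Set.mem_insert _ _))
    (Submodule.subset_span (Set.mem_insert_of_mem _ rfl))
  exact Submodule.mem_span_pair.mp (pencil_mem ha hb n)

end Pencil

theorem eq_of_dvd_pencil_of_dvd_pencil {B : Type*} [CommRing B] [Algebra k B] {a b p : B}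
    (hab : IsRelPrime a b) (hp : ¬ IsUnit p) {l m : Option k} (hl : p ∣ pencil a b l)
    (hm : p ∣ pencil a b m) : l = m := by
  by_contra hlm
  obtain ⟨ha, hb⟩ := mem_and_mem_of_pencil_mem (S := (Ideal.span {p}).restrictScalars k) hlm
    (Ideal.mem_span_singleton.mpr hl) (Ideal.mem_span_singleton.mpr hm)
  exact hp (hab (Ideal.mem_span_singleton.mp ha) (Ideal.mem_span_singleton.mp hb))

section BalancedQuotients

variable {J F : Type*} [Field F] [Algebra k F]

variable (k) in
/-- The multiplicative monoid of the quotients `c M / M'`, where `c` is a nonzero scalar and `M`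
and `M'` are monomials of the same degree in the members of the family `L`. The defining equation
is stated without a division, so `L` may have vanishing members. -/
def balancedQuotients (L : J → F) : Submonoid F where
  carrier := {z | ∃ c : k, c ≠ 0 ∧ ∃ e e' : J →₀ ℕ, e.degree = e'.degree ∧
    z * (e'.prod fun j n => L j ^ n) = c • e.prod fun j n => L j ^ n}
  one_mem' := ⟨1, one_ne_zero, 0, 0, rfl, by rw [one_mul, one_smul]⟩
  mul_mem' := by
    classical
    rintro y z ⟨c, hc, e, e', he, hy⟩ ⟨d, hd, f, f', hf, hz⟩
    refine ⟨c * d, mul_ne_zero hc hd, e + f, e' + f', by rw [map_add, map_add, he, hf], ?_⟩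
    rw [Finsupp.prod_add_index' (fun _ => pow_zero _) (fun _ _ _ => pow_add _ _ _),
      Finsupp.prod_add_index' (fun _ => pow_zero _) (fun _ _ _ => pow_add _ _ _),
      mul_mul_mul_comm, hy, hz, smul_mul_smul_comm]

variable {L : J → F}

theorem mem_balancedQuotients {z : F} : z ∈ balancedQuotients k L ↔
    ∃ c : k, c ≠ 0 ∧ ∃ e e' : J →₀ ℕ, e.degree = e'.degree ∧
      z * (e'.prod fun j n => L j ^ n) = c • e.prod fun j n => L j ^ n :=
  Iff.rfl

theorem inv_mem_balancedQuotients {z : F} (hz0 : z ≠ 0) (hz : z ∈ balancedQuotients k L) :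
    z⁻¹ ∈ balancedQuotients k L := by
  obtain ⟨c, hc, e, e', he, hz⟩ := hz
  refine ⟨c⁻¹, inv_ne_zero hc, e', e, he.symm, ?_⟩
  rw [← inv_smul_smul₀ hc (e.prod fun j n => L j ^ n), ← hz, mul_smul_comm,
    inv_mul_cancel_left₀ hz0]

theorem algebraMap_mem_balancedQuotients {c : k} (hc : c ≠ 0) :
    algebraMap k F c ∈ balancedQuotients k L :=
  ⟨c, hc, 0, 0, rfl, by rw [Finsupp.prod_zero_index, mul_one, Algebra.algebraMap_eq_smul_one]⟩

theorem div_mem_balancedQuotients {i j : J} (hj : L j ≠ 0) : L i / L j ∈ balancedQuotients k L :=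
  ⟨1, one_ne_zero, .single i 1, .single j 1, by simp, by simp [hj]⟩

theorem aeval_div_mem_balancedQuotients_pencil [IsAlgClosed k] {a b : F} (hb : b ≠ 0)
    {P : Polynomial k} (hP : P ≠ 0) :
    Polynomial.aeval (a / b) P ∈ balancedQuotients k (pencil (k := k) a b) := by
  rw [(IsAlgClosed.splits P).eq_prod_roots, map_mul, Polynomial.aeval_C, map_multiset_prod,
    Multiset.map_map]
  refine mul_mem (algebraMap_mem_balancedQuotients (Polynomial.leadingCoeff_ne_zero.mpr hP))
    (multiset_prod_mem _ fun z hz => ?_)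
  obtain ⟨α, -, rfl⟩ := Multiset.mem_map.mp hz
  have hdiv : Polynomial.aeval (a / b) (Polynomial.X - Polynomial.C α) =
      pencil a b (some α) / pencil (k := k) a b none := by
    rw [map_sub, Polynomial.aeval_X, Polynomial.aeval_C, pencil, pencil, Algebra.smul_def]
    field_simp
  rw [Function.comp_apply, hdiv]
  exact div_mem_balancedQuotients hb

theorem mem_balancedQuotients_pencil_of_mem_adjoin [IsAlgClosed k] {a b z : F} (hb : b ≠ 0)
    (hz0 : z ≠ 0) (hz : z ∈ IntermediateField.adjoin k {a / b}) :
    z ∈ balancedQuotients k (pencil (k := k) a b) := by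
  obtain ⟨P, Q, rfl⟩ := (IntermediateField.mem_adjoin_simple_iff k z).mp hz
  obtain ⟨hP, hQ⟩ := div_ne_zero_iff.mp hz0
  have ne_zero : ∀ {R : Polynomial k}, Polynomial.aeval (a / b) R ≠ 0 → R ≠ 0 := fun h hR =>
    h (by rw [hR, map_zero])
  rw [div_eq_mul_inv]
  exact mul_mem (aeval_div_mem_balancedQuotients_pencil hb (ne_zero hP))
    (inv_mem_balancedQuotients hQ (aeval_div_mem_balancedQuotients_pencil hb (ne_zero hQ)))

end BalancedQuotients

/-! ### Generating pencils -/

section GeneratingPencil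

universe v w

variable {ι : Type v} {B : Type w} [AddCommGroup ι] [DecidableEq ι] [CommRing B] [IsDomain B]
  [Algebra k B] {𝒜 : ι → Submodule k B} [GradedAlgebra 𝒜]

theorem degreeZeroFractions_ne_bot [Module.Finite ℤ ι] [Module.Free ℤ ι]
    (htrdeg : Algebra.trdeg k B = Module.finrank ℤ ι + 1) : degreeZeroFractions 𝒜 ≠ ⊥ := by
  intro hbot
  have hle := lift_trdeg_le_rank_of_degreeZeroFractions_eq_bot hbot
  rw [htrdeg, ← Module.finrank_eq_rank] at hle
  simp only [Cardinal.lift_add, Cardinal.lift_natCast, Cardinal.lift_one] at hle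
  norm_cast at hle
  omega

theorem trdeg_degreeZeroFractions_le_one [Module.Finite ℤ ι]
    (heff : AddSubgroup.closure {g : ι | 𝒜 g ≠ ⊥} = ⊤)
    (htrdeg : Algebra.trdeg k B = Module.finrank ℤ ι + 1) :
    Algebra.trdeg k (degreeZeroFractions 𝒜) ≤ 1 := by
  have hle := trdeg_degreeZeroFractions_add_finrank_le heff
  rw [htrdeg, add_comm _ 1] at hle
  exact (Cardinal.add_le_add_iff_of_lt_aleph0 Cardinal.natCast_lt_aleph0).mp hle

theorem isAlgebraic_adjoin_singleton_of_trdeg_le_one {E : Type*} [Field E] [Algebra k E]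
    (htrdeg : Algebra.trdeg k E ≤ 1) {u : E} (hu : Transcendental k u) :
    Algebra.IsAlgebraic (Algebra.adjoin k {u}) E := by
  have hind : AlgebraicIndependent k fun _ : Unit => u :=
    algebraicIndependent_unique_type_iff.mpr hu
  have hbasis := hind.isTranscendenceBasis_of_lift_trdeg_le_of_finite (by simpa using htrdeg)
  have halg := hbasis.isAlgebraic
  rw [Set.range_const] at halg
  exact halg

theorem transcendental_of_notMem_range [IsAlgClosed k] {E : Type*} [Field E] [Algebra k E] {u : E}
    (hu : u ∉ Set.range (algebraMap k E)) : Transcendental k u := fun halg =>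
  hu (minpoly.mem_range_of_degree_eq_one k u
    (IsAlgClosed.degree_eq_one_of_irreducible k (minpoly.irreducible halg.isIntegral)))

theorem exists_adjoin_simple_eq_top_of_trdeg_le_one [IsAlgClosed k] {E σ : Type*} [Field E]
    [Algebra k E] (htrdeg : Algebra.trdeg k E ≤ 1)
    (j : E →ₐ[k] FractionRing (MvPolynomial σ k)) :
    ∃ t : E, IntermediateField.adjoin k {t} = ⊤ := by
  by_cases hu : ∃ u, u ∉ Set.range (algebraMap k E)
  · obtain ⟨u, hu⟩ := hu
    have := isAlgebraic_adjoin_singleton_of_trdeg_le_one htrdeg (transcendental_of_notMem_range hu)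
    exact exists_adjoin_simple_eq_top_of_algHom_ratFunc (nonempty_algHom_ratFunc j hu).some
  · push Not at hu
    refine ⟨0, eq_top_iff.mpr fun z _ => ?_⟩
    obtain ⟨c, rfl⟩ := hu z
    exact algebraMap_mem _ c

variable (𝒜) in
/-- Coprime elements `a` and `b` of the same nonzero degree whose quotient generates the field of
homogeneous fractions of degree zero. -/
structure IsGeneratingPencil (g : ι) (a b : B) : Prop where
  left_mem : a ∈ 𝒜 g
  right_mem : b ∈ 𝒜 g
  degree_ne_zero : g ≠ 0
  isRelPrime : IsRelPrime a b
  pencil_ne_zero : ∀ l : Option k, pencil a b l ≠ 0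
  degreeZeroFractions_le : degreeZeroFractions 𝒜 ≤
    IntermediateField.adjoin k {algebraMap B (FractionRing B) a / algebraMap B (FractionRing B) b}

theorem exists_isRelPrime_of_mem_degreeZeroFractions [UniqueFactorizationMonoid B]
    [TwoUniqueSums ι] {t : FractionRing B} (ht : t ∈ degreeZeroFractions 𝒜) (ht0 : t ≠ 0) :
    ∃ g, ∃ a ∈ 𝒜 g, ∃ b ∈ 𝒜 g, b ≠ 0 ∧ IsRelPrime a b ∧
      t = algebraMap B (FractionRing B) a / algebraMap B (FractionRing B) b := by
  obtain ⟨h, a₀, ha₀, b₀, hb₀, hb₀0, rfl⟩ := mem_degreeZeroFractions.mp ht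
  obtain ⟨a, b, c, hrel, rfl, rfl⟩ := UniqueFactorizationMonoid.exists_reduced_factors' a₀ b₀ hb₀0
  have hca0 : c * a ≠ 0 := fun h0 => ht0 (by rw [h0, map_zero, zero_div])
  have hc0 : c ≠ 0 := left_ne_zero_of_mul hca0
  obtain ⟨i, g, hig, hci, hag⟩ := exists_mem_mem_of_mul_mem 𝒜 ha₀ hca0
  obtain ⟨i', g', hig', hci', hbg⟩ := exists_mem_mem_of_mul_mem 𝒜 hb₀ hb₀0
  obtain rfl : i = i' := DirectSum.degree_eq_of_mem_mem 𝒜 hci hci' hc0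
  obtain rfl : g = g' := add_left_cancel (hig.trans hig'.symm)
  refine ⟨g, a, hag, b, hbg, right_ne_zero_of_mul hb₀0, hrel, ?_⟩
  rw [map_mul, map_mul, mul_div_mul_left _ _ (by simpa using hc0)]

theorem exists_isGeneratingPencil [UniqueFactorizationMonoid B] [TwoUniqueSums ι]
    (hzero : ∀ b ∈ 𝒜 0, ∃ c : k, b = algebraMap k B c) (hbot : degreeZeroFractions 𝒜 ≠ ⊥)
    {t : FractionRing B} (ht : IntermediateField.adjoin k {t} = degreeZeroFractions 𝒜) :
    ∃ g a b, IsGeneratingPencil 𝒜 g a b := by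
  have ht_notMem : ∀ c : k, t ≠ algebraMap k (FractionRing B) c := by
    rintro c rfl
    exact hbot (ht ▸ IntermediateField.adjoin_simple_eq_bot_iff.mpr (algebraMap_mem _ c))
  obtain ⟨g, a, ha, b, hb, hb0, hrel, rfl⟩ := exists_isRelPrime_of_mem_degreeZeroFractions
    (ht ▸ IntermediateField.mem_adjoin_simple_self k t) (by simpa using ht_notMem 0)
  have hbF : algebraMap B (FractionRing B) b ≠ 0 := by simpa using hb0
  refine ⟨g, a, b, ha, hb, ?_, hrel, ?_, ht.ge⟩
  · rintro rfl
    obtain ⟨x, rfl⟩ := hzero a ha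
    obtain ⟨y, rfl⟩ := hzero b hb
    refine ht_notMem (x / y) ?_
    rw [map_div₀, ← IsScalarTower.algebraMap_apply, ← IsScalarTower.algebraMap_apply]
  · rintro (_ | α)
    · exact hb0
    · refine fun h0 => ht_notMem α ?_
      rw [div_eq_iff hbF, sub_eq_zero.mp h0, Algebra.smul_def, map_mul,
        ← IsScalarTower.algebraMap_apply]

theorem exists_isGeneratingPencil_of_unirational [IsAlgClosed k] [UniqueFactorizationMonoid B]
    [AddGroup.FG ι] [IsAddTorsionFree ι]
    (heff : AddSubgroup.closure {g : ι | 𝒜 g ≠ ⊥} = ⊤)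
    (hzero : ∀ b ∈ 𝒜 0, ∃ c : k, b = algebraMap k B c)
    (htrdeg : Algebra.trdeg k B = Module.finrank ℤ ι + 1) {σ : Type*}
    (φ : FractionRing B →ₐ[k] FractionRing (MvPolynomial σ k)) :
    ∃ g a b, IsGeneratingPencil 𝒜 g a b := by
  obtain ⟨t, ht⟩ := exists_adjoin_simple_eq_top_of_trdeg_le_one
    (trdeg_degreeZeroFractions_le_one heff htrdeg) (φ.comp (degreeZeroFractions 𝒜).val)
  refine exists_isGeneratingPencil hzero (degreeZeroFractions_ne_bot htrdeg) (t := t) ?_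
  have hlift := congrArg IntermediateField.lift ht
  rwa [IntermediateField.lift_adjoin_simple, IntermediateField.lift_top] at hlift

end GeneratingPencil

section ScalarUnits

variable {B : Type*} [CommRing B] [Algebra k B]

theorem mem_of_associated {S : Submodule k B}
    (hunits : ∀ u : B, IsUnit u → ∃ c : k, u = algebraMap k B c) {x y : B}
    (hxy : Associated x y) (hx : x ∈ S) : y ∈ S := by
  obtain ⟨u, rfl⟩ := hxy
  obtain ⟨c, hc⟩ := hunits u u.isUnit
  rw [hc, mul_comm, ← Algebra.smul_def]
  exact S.smul_mem c hx

theorem exists_pow_eq_of_dvd_multiplicity [IsDomain B] [UniqueFactorizationMonoid B]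
    [IsAlgClosed k] (hunits : ∀ u : B, IsUnit u → ∃ c : k, u = algebraMap k B c) {q : ℕ}
    (hq : q ≠ 0) {b : B} (hb : b ≠ 0) (h : ∀ p, Prime p → q ∣ multiplicity p b) :
    ∃ a, a ^ q = b := by
  obtain ⟨a, u, rfl⟩ := exists_associated_pow_of_dvd_multiplicity hq hb h
  obtain ⟨c, hc⟩ := hunits u u.isUnit
  obtain ⟨z, rfl⟩ := IsAlgClosed.exists_pow_nat_eq c (Nat.pos_of_ne_zero hq)
  exact ⟨a * algebraMap k B z, by rw [mul_pow, ← map_pow, ← hc]⟩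

end ScalarUnits

theorem finite_setOf_exists_nsmul_eq {M : Type*} [AddCommGroup M] [Module.Free ℤ M] {g : M}
    (hg : g ≠ 0) : {m : ℕ | ∃ i, m • i = g}.Finite := by
  let basis := Module.Free.chooseBasis ℤ M
  obtain ⟨x, hx⟩ := Finsupp.ne_iff.mp (basis.repr.map_ne_zero_iff.mpr hg)
  refine (basis.repr g x).natAbs.divisors.finite_toSet.subset ?_
  rintro m ⟨i, rfl⟩
  rw [Finset.mem_coe, Nat.mem_divisors]
  refine ⟨?_, Int.natAbs_ne_zero.mpr hx⟩
  rw [map_nsmul, Finsupp.smul_apply, nsmul_eq_mul, Int.natAbs_mul, Int.natAbs_natCast]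
  exact dvd_mul_right _ _

namespace IsGeneratingPencil

variable {ι B : Type*} [AddCommGroup ι] [DecidableEq ι] [CommRing B] [IsDomain B] [Algebra k B]
  {𝒜 : ι → Submodule k B} [GradedAlgebra 𝒜] {g : ι} {a b : B}

theorem member_mem (P : IsGeneratingPencil 𝒜 g a b) (l : Option k) : pencil a b l ∈ 𝒜 g :=
  pencil_mem P.left_mem P.right_mem l

theorem eq_of_dvd_of_dvd (P : IsGeneratingPencil 𝒜 g a b) {p : B} (hp : Prime p) {l m : Option k}
    (hl : p ∣ pencil a b l) (hm : p ∣ pencil a b m) : l = m :=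
  eq_of_dvd_pencil_of_dvd_pencil P.isRelPrime hp.not_isUnit hl hm

theorem exists_mul_prod_eq_smul [IsAlgClosed k] (P : IsGeneratingPencil 𝒜 g a b) {h : ι}
    {f f' : B} (hf : f ∈ 𝒜 h) (hf' : f' ∈ 𝒜 h) (hf0 : f ≠ 0) (hf'0 : f' ≠ 0) :
    ∃ c : k, c ≠ 0 ∧ ∃ e e' : Option k →₀ ℕ, e.degree = e'.degree ∧
      f * (e'.prod fun l n => pencil a b l ^ n) =
        c • (f' * e.prod fun l n => pencil a b l ^ n) := by
  let toFrac := algebraMap B (FractionRing B)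
  have toFrac_ne_zero : ∀ {x : B}, x ≠ 0 → toFrac x ≠ 0 := fun hx => by simpa [toFrac] using hx
  obtain ⟨c, hc, e, e', he, heq⟩ := mem_balancedQuotients.mp <|
    mem_balancedQuotients_pencil_of_mem_adjoin (toFrac_ne_zero (P.pencil_ne_zero none))
      (div_ne_zero (toFrac_ne_zero hf0) (toFrac_ne_zero hf'0))
      (P.degreeZeroFractions_le (mem_degreeZeroFractions.mpr ⟨h, f, hf, f', hf', hf'0, rfl⟩))
  refine ⟨c, hc, e, e', he, IsFractionRing.injective B (FractionRing B) ?_⟩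
  have map_pencil : ∀ l : Option k, pencil (toFrac a) (toFrac b) l = toFrac (pencil a b l) := by
    rintro (_ | α) <;> simp [pencil, toFrac, Algebra.smul_def,
      ← IsScalarTower.algebraMap_apply k B (FractionRing B)]
  have map_monomial : ∀ e : Option k →₀ ℕ,
      (e.prod fun l n => pencil (toFrac a) (toFrac b) l ^ n) =
        toFrac (e.prod fun l n => pencil a b l ^ n) := fun e => by
    simp only [map_pencil, map_finsuppProd, map_pow]
  change toFrac f / toFrac f' * (e'.prod fun l n => pencil (toFrac a) (toFrac b) l ^ n) =
    c • (e.prod fun l n => pencil (toFrac a) (toFrac b) l ^ n) at heq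
  rw [map_monomial, map_monomial, div_mul_eq_mul_div, div_eq_iff (toFrac_ne_zero hf'0)] at heq
  rw [map_mul, heq, Algebra.smul_def, Algebra.smul_def, map_mul, map_mul,
    ← IsScalarTower.algebraMap_apply]
  ring

theorem not_isUnit (P : IsGeneratingPencil 𝒜 g a b)
    (hunits : ∀ u : B, IsUnit u → ∃ c : k, u = algebraMap k B c) (l : Option k) :
    ¬ IsUnit (pencil a b l) := by
  intro hu
  obtain ⟨c, hc⟩ := hunits _ hu
  have hmem : pencil a b l ∈ 𝒜 0 := hc ▸ SetLike.algebraMap_mem_graded 𝒜 c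
  exact P.degree_ne_zero
    (DirectSum.degree_eq_of_mem_mem 𝒜 (P.member_mem l) hmem (P.pencil_ne_zero l))

theorem exists_prime_dvd [UniqueFactorizationMonoid B] (P : IsGeneratingPencil 𝒜 g a b)
    (hunits : ∀ u : B, IsUnit u → ∃ c : k, u = algebraMap k B c) (l : Option k) :
    ∃ p, Prime p ∧ p ∣ pencil a b l := by
  obtain ⟨p, hp, hpl⟩ :=
    WfDvdMonoid.exists_irreducible_factor (P.not_isUnit hunits l) (P.pencil_ne_zero l)
  exact ⟨p, hp.prime, hpl⟩

variable [UniqueFactorizationMonoid B] [IsAlgClosed k]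

/- The coefficients `D l` are the multiplicities of the members of the pencil in `f / f'`, a
rational function of `a / b`; they sum to zero because such a function has as many zeros as
poles. -/
theorem exists_divisor (P : IsGeneratingPencil 𝒜 g a b) {h : ι} {f f' : B} (hf : f ∈ 𝒜 h)
    (hf' : f' ∈ 𝒜 h) (hf0 : f ≠ 0) (hf'0 : f' ≠ 0) :
    ∃ D : Option k →₀ ℤ, D.degree = 0 ∧
      (∀ l p, Prime p → p ∣ pencil a b l →
        (multiplicity p f : ℤ) = multiplicity p f' + D l * multiplicity p (pencil a b l)) ∧
      ∀ p, Prime p → (∀ l : Option k, ¬ p ∣ pencil a b l) →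
        multiplicity p f = multiplicity p f' := by
  obtain ⟨c, hc, e, e', he, heq⟩ := P.exists_mul_prod_eq_smul hf hf' hf0 hf'0
  have hunit : IsUnit (algebraMap k B c) := (IsUnit.mk0 c hc).map _
  have hmul : ∀ p, Prime p →
      multiplicity p f + multiplicity p (e'.prod fun l n => pencil a b l ^ n) =
        multiplicity p f' + multiplicity p (e.prod fun l n => pencil a b l ^ n) := fun p hp => by
    have hmonomial := finsupp_prod_pow_ne_zero P.pencil_ne_zero
    rw [← multiplicity_mul_of_ne_zero hp hf0 (hmonomial e'), heq, Algebra.smul_def,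
      multiplicity_mul_of_ne_zero hp hunit.ne_zero (mul_ne_zero hf'0 (hmonomial e)),
      multiplicity_eq_zero_of_isUnit hp hunit, zero_add,
      multiplicity_mul_of_ne_zero hp hf'0 (hmonomial e)]
  let toInt : (Option k →₀ ℕ) →+ (Option k →₀ ℤ) :=
    Finsupp.mapRange.addMonoidHom (Nat.castAddMonoidHom ℤ)
  have degree_toInt : ∀ e, (toInt e).degree = (e.degree : ℤ) := fun e => by
    have hcomp : Finsupp.degree.comp toInt = (Nat.castAddMonoidHom ℤ).comp Finsupp.degree := by
      ext
      simp [toInt]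
    exact DFunLike.congr_fun hcomp e
  refine ⟨toInt e - toInt e', ?_, fun l p hp hpl => ?_, fun p hp hndvd => ?_⟩
  · rw [map_sub, degree_toInt, degree_toInt, he, sub_self]
  · have hp_mul := hmul p hp
    have hl : ∀ m, p ∣ pencil a b m → m = l := fun m hm => P.eq_of_dvd_of_dvd hp hm hpl
    rw [multiplicity_finsupp_prod_pow_of_dvd_imp_eq hp P.pencil_ne_zero hl,
      multiplicity_finsupp_prod_pow_of_dvd_imp_eq hp P.pencil_ne_zero hl] at hp_mul
    have happly : (toInt e - toInt e') l = (e l : ℤ) - e' l := rfl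
    rw [happly]
    zify at hp_mul
    linear_combination hp_mul
  · have hp_mul := hmul p hp
    rwa [multiplicity_finsupp_prod_pow_of_not_dvd hp P.pencil_ne_zero hndvd,
      multiplicity_finsupp_prod_pow_of_not_dvd hp P.pencil_ne_zero hndvd] at hp_mul

/- A relation between the degrees of the `p j` yields two monomials in the `p j` of the same degree.
By the existence of `p'` the divisor of their quotient vanishes on every member of the pencil
divisible by some `p j`. -/
theorem finite_of_forall_prime [Module.Finite ℤ ι] (P : IsGeneratingPencil 𝒜 g a b) {J : Type*}
    {p : J → B} (hp : ∀ j, Prime (p j)) {deg : J → ι} (hdeg : ∀ j, p j ∈ 𝒜 (deg j))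
    (hassoc : ∀ i j, Associated (p i) (p j) → i = j)
    (hmember : ∀ (j) (l : Option k), p j ∣ pencil a b l →
      ∃ p', Prime p' ∧ p' ∣ pencil a b l ∧ ∀ i, ¬ Associated p' (p i)) : Finite J := by
  have hp0 : ∀ j, p j ≠ 0 := fun j => (hp j).ne_zero
  have hind : LinearIndependent ℕ deg := by
    intro e e' hee
    have hmem := finsupp_prod_pow_mem_graded hdeg e
    rw [hee] at hmem
    obtain ⟨D, -, hD, hD'⟩ := P.exists_divisor hmem (finsupp_prod_pow_mem_graded hdeg e')
      (finsupp_prod_pow_ne_zero hp0 e) (finsupp_prod_pow_ne_zero hp0 e')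
    ext j
    have hself := multiplicity_self_finsupp_prod_pow hp hassoc
    by_cases hj : ∀ l : Option k, ¬ p j ∣ pencil a b l
    · rw [← hself e j, ← hself e' j, hD' (p j) (hp j) hj]
    · push Not at hj
      obtain ⟨l, hl⟩ := hj
      obtain ⟨p', hp', hpl', hassoc'⟩ := hmember j l hl
      have hndvd : ∀ i, ¬ p' ∣ p i := fun i hi => hassoc' i (hp'.associated_of_dvd (hp i) hi)
      have hDl := hD l p' hp' hpl'
      rw [multiplicity_finsupp_prod_pow_of_not_dvd hp' hp0 hndvd,
        multiplicity_finsupp_prod_pow_of_not_dvd hp' hp0 hndvd] at hDl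
      have hDl0 : D l = 0 := by simpa [multiplicity_eq_zero, hpl'] using hDl
      have hDj := hD l (p j) (hp j) hl
      rw [hself, hself, hDl0] at hDj
      simpa using hDj
  exact (linearIndependent_int_of_nat hind).finite

/- Otherwise two members are `q`-th powers `x ^ q` and `y ^ q`, and `x / y` would be a rational
function of `a / b` vanishing to order `1 / q` at the first member. -/
theorem eq_one_of_forall_dvd_multiplicity [AddGroup.FG ι] [IsAddTorsionFree ι]
    (P : IsGeneratingPencil 𝒜 g a b) (hunits : ∀ u : B, IsUnit u → ∃ c : k, u = algebraMap k B c)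
    {l m : Option k} (hlm : l ≠ m) {q : ℕ} (hl : ∀ p, Prime p → q ∣ multiplicity p (pencil a b l))
    (hm : ∀ p, Prime p → q ∣ multiplicity p (pencil a b m)) : q = 1 := by
  obtain ⟨p, hp, hpl⟩ := P.exists_prime_dvd hunits l
  have hq : q ≠ 0 := fun hq => multiplicity_ne_zero.mpr hpl (Nat.eq_zero_of_zero_dvd (hq ▸ hl p hp))
  have exists_root_mem : ∀ l : Option k, (∀ p, Prime p → q ∣ multiplicity p (pencil a b l)) →
      ∃ x i, x ^ q = pencil a b l ∧ x ∈ 𝒜 i ∧ q • i = g := fun l hl => by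
    obtain ⟨x, hx⟩ := exists_pow_eq_of_dvd_multiplicity hunits hq (P.pencil_ne_zero l) hl
    obtain ⟨i, hi⟩ := isHomogeneousElem_of_dvd (𝒜 := 𝒜) ⟨g, P.member_mem l⟩ (P.pencil_ne_zero l)
      (hx ▸ dvd_pow_self x hq)
    have hmem : pencil a b l ∈ 𝒜 (q • i) := hx ▸ SetLike.pow_mem_graded q hi
    exact ⟨x, i, hx, hi,
      DirectSum.degree_eq_of_mem_mem 𝒜 hmem (P.member_mem l) (P.pencil_ne_zero l)⟩
  obtain ⟨x, i, hx, hxi, hi⟩ := exists_root_mem l hl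
  obtain ⟨y, j, hy, hyj, hj⟩ := exists_root_mem m hm
  obtain rfl : i = j := nsmul_right_injective hq (hi.trans hj.symm)
  have hx0 : x ≠ 0 := fun h => P.pencil_ne_zero l (by rw [← hx, h, zero_pow hq])
  have hy0 : y ≠ 0 := fun h => P.pencil_ne_zero m (by rw [← hy, h, zero_pow hq])
  obtain ⟨D, -, hD, -⟩ := P.exists_divisor hxi hyj hx0 hy0
  have hpx : multiplicity p x ≠ 0 := multiplicity_ne_zero.mpr (hp.dvd_of_dvd_pow (hx ▸ hpl))
  have hpy : multiplicity p y = 0 := multiplicity_eq_zero.mpr fun h =>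
    hlm (P.eq_of_dvd_of_dvd hp hpl (hy ▸ dvd_pow h hq))
  have hDl := hD l p hp hpl
  rw [hpy, ← hx, multiplicity_pow_of_ne_zero hp hx0] at hDl
  have hDq : (D l * q - 1) * multiplicity p x = 0 := by
    push_cast at hDl
    linear_combination -hDl
  have hDq1 : D l * q = 1 :=
    sub_eq_zero.mp ((mul_eq_zero.mp hDq).resolve_right (Int.natCast_ne_zero.mpr hpx))
  exact Int.natCast_dvd_natCast.mp (Dvd.intro_left _ hDq1) |> Nat.dvd_one.mp

theorem finite_setOf_two_prime_dvd [AddGroup.FG ι] [IsAddTorsionFree ι]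
    (P : IsGeneratingPencil 𝒜 g a b) :
    {l : Option k | ∃ p p', Prime p ∧ Prime p' ∧ p ∣ pencil a b l ∧ p' ∣ pencil a b l ∧
      ¬ Associated p' p}.Finite := by
  choose! p p' hp hp' hpl hpl' hassoc using fun (l : Option k) (hl : ∃ p p', Prime p ∧ Prime p' ∧
    p ∣ pencil a b l ∧ p' ∣ pencil a b l ∧ ¬ Associated p' p) => hl
  choose! deg hdeg using fun l hl =>
    isHomogeneousElem_of_dvd (𝒜 := 𝒜) ⟨g, P.member_mem l⟩ (P.pencil_ne_zero l) (hpl l hl)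
  refine Set.finite_coe_iff.mp (P.finite_of_forall_prime (p := fun l : {l // _} => p l)
    (fun l => hp l l.2) (deg := fun l => deg l) (fun l => hdeg l l.2) (fun i j hij => ?_)
    fun j l hjl => ?_)
  · exact Subtype.ext (P.eq_of_dvd_of_dvd (hp i i.2) (hpl i i.2) (hij.dvd.trans (hpl j j.2)))
  · obtain rfl : (j : Option k) = l := P.eq_of_dvd_of_dvd (hp j j.2) (hpl j j.2) hjl
    refine ⟨p' j, hp' j j.2, hpl' j j.2, fun i hi => ?_⟩
    obtain rfl : i = j := Subtype.ext
      (P.eq_of_dvd_of_dvd (hp i i.2) (hpl i i.2) (hi.symm.dvd.trans (hpl' j j.2)))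
    exact hassoc i i.2 hi

theorem finite_setOf_forall_dvd_multiplicity [AddGroup.FG ι] [IsAddTorsionFree ι]
    (P : IsGeneratingPencil 𝒜 g a b)
    (hunits : ∀ u : B, IsUnit u → ∃ c : k, u = algebraMap k B c) :
    {l : Option k | ∃ m ≠ 1, (∃ i, m • i = g) ∧
      ∀ p, Prime p → m ∣ multiplicity p (pencil a b l)}.Finite := by
  choose! m hm1 hmg hm using fun (l : Option k) (hl : ∃ m ≠ 1, (∃ i, m • i = g) ∧
    ∀ p, Prime p → m ∣ multiplicity p (pencil a b l)) => hl
  refine Set.Finite.of_finite_image (f := m)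
    ((finite_setOf_exists_nsmul_eq P.degree_ne_zero).subset ?_) fun l hl l' hl' hll' => ?_
  · rintro _ ⟨l, hl, rfl⟩
    exact hmg l hl
  · by_contra hne
    exact hm1 l hl (P.eq_one_of_forall_dvd_multiplicity hunits hne (hm l hl) (hll' ▸ hm l' hl'))

theorem finite_setOf_not_prime [AddGroup.FG ι] [IsAddTorsionFree ι]
    (P : IsGeneratingPencil 𝒜 g a b)
    (hunits : ∀ u : B, IsUnit u → ∃ c : k, u = algebraMap k B c) :
    {l : Option k | ¬ Prime (pencil a b l)}.Finite := by
  refine (P.finite_setOf_two_prime_dvd.union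
    (P.finite_setOf_forall_dvd_multiplicity hunits)).subset fun l hl => ?_
  rw [Set.mem_union, or_iff_not_imp_left]
  intro hsingle
  obtain ⟨p, hp, hpl⟩ := P.exists_prime_dvd hunits l
  have hall : ∀ q, Prime q → q ∣ pencil a b l → Associated q p := fun q hq hql => by
    by_contra h
    exact hsingle ⟨p, q, hp, hq, hpl, hql, h⟩
  have hassoc := associated_pow_multiplicity_of_forall_prime_dvd hp (P.pencil_ne_zero l) hall
  refine ⟨multiplicity p (pencil a b l), fun h1 => ?_, ?_, fun q hq => ?_⟩
  · rw [h1, pow_one] at hassoc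
    exact hl (hassoc.prime hp)
  · obtain ⟨i, hi⟩ := isHomogeneousElem_of_dvd (𝒜 := 𝒜) ⟨g, P.member_mem l⟩
      (P.pencil_ne_zero l) hpl
    exact ⟨i, DirectSum.degree_eq_of_mem_mem 𝒜
      (mem_of_associated hunits hassoc (SetLike.pow_mem_graded _ hi)) (P.member_mem l)
      (P.pencil_ne_zero l)⟩
  · by_cases hqp : Associated q p
    · rw [multiplicity_eq_of_associated_left hqp]
    · rw [multiplicity_eq_zero.mpr (mt (hall q hq) hqp)]
      exact dvd_zero _

end IsGeneratingPencil

/-! ### Systems of homogeneous primes -/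

theorem exists_fin_forall_associated {M : Type*} [CommMonoid M] {S : Set M}
    (hS : (Associates.mk '' S).Finite) :
    ∃ (n : ℕ) (p : Fin n → M), (∀ j, p j ∈ S) ∧ (∀ i j, Associated (p i) (p j) → i = j) ∧
      ∀ q ∈ S, ∃ j, Associated q (p j) := by
  have := hS.to_subtype
  obtain ⟨n, ⟨equiv⟩⟩ := Finite.exists_equiv_fin (Associates.mk '' S)
  choose rep hrep hmk using fun c : Associates.mk '' S => c.2
  refine ⟨n, fun j => rep (equiv.symm j), fun j => hrep _, fun i j hij => ?_, fun q hq => ?_⟩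
  · have hmk_eq := Associates.mk_eq_mk_iff_associated.mpr hij
    rw [hmk, hmk] at hmk_eq
    exact equiv.symm.injective (Subtype.ext hmk_eq)
  · refine ⟨equiv ⟨_, q, hq, rfl⟩, Associates.mk_eq_mk_iff_associated.mp ?_⟩
    rw [hmk, Equiv.symm_apply_apply]

theorem finite_associates_mk_image_setOf_prime_dvd {R : Type*} [CommMonoidWithZero R]
    [UniqueFactorizationMonoid R] {b : R} (hb : b ≠ 0) :
    (Associates.mk '' {p | Prime p ∧ p ∣ b}).Finite := by
  refine ((Multiset.finite_toSet (UniqueFactorizationMonoid.factors b)).image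
    Associates.mk).subset ?_
  rintro _ ⟨p, ⟨hp, hpb⟩, rfl⟩
  obtain ⟨q, hq, hpq⟩ :=
    UniqueFactorizationMonoid.exists_mem_factors_of_dvd hb hp.irreducible hpb
  exact ⟨q, hq, (Associates.mk_eq_mk_iff_associated.mpr hpq).symm⟩

theorem IsGeneratingPencil.finite_associates_mk_image_setOf_not_dvd [IsAlgClosed k]
    {ι B : Type*} [AddCommGroup ι] [DecidableEq ι] [Module.Finite ℤ ι] [CommRing B] [IsDomain B]
    [Algebra k B] [UniqueFactorizationMonoid B] {𝒜 : ι → Submodule k B} [GradedAlgebra 𝒜] {g : ι}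
    {a b : B} (P : IsGeneratingPencil 𝒜 g a b) :
    (Associates.mk '' {p | Prime p ∧ SetLike.IsHomogeneousElem 𝒜 p ∧
      ∀ l : Option k, ¬ p ∣ pencil a b l}).Finite := by
  choose rep hrep hmk using fun c : Associates.mk '' {p | Prime p ∧
    SetLike.IsHomogeneousElem 𝒜 p ∧ ∀ l : Option k, ¬ p ∣ pencil a b l} => c.2
  choose hprime hhom hndvd using hrep
  choose deg hdeg using hhom
  refine Set.finite_coe_iff.mp (P.finite_of_forall_prime hprime hdeg (fun c d hcd => ?_)
    fun c l hl => absurd hl (hndvd c l))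
  rw [← Subtype.coe_inj, ← hmk c, ← hmk d]
  exact Associates.mk_eq_mk_iff_associated.mpr hcd

section PrimeSystem

variable {ι B I V : Type*} {J : I → Type*} [CommRing B] [Algebra k B]

/-- A system of pairwise non-associated homogeneous primes adapted to the pencil of `a` and `b`.
The primes `t (inr ⟨i, j⟩)` are the prime divisors of the member at `σ i`, the primes `t (inl v)`
are the homogeneous primes dividing no member, and the members outside the range of `σ` are
prime; so every homogeneous prime is associated to one of the `t v` or to a member. -/
structure IsPrimeSystem (𝒜 : ι → Submodule k B) (a b : B) (σ : I → Option k)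
    (t : (V ⊕ Σ i, J i) → B) : Prop where
  prime : ∀ v, Prime (t v)
  isHomogeneousElem : ∀ v, SetLike.IsHomogeneousElem 𝒜 (t v)
  eq_of_associated : ∀ v w, Associated (t v) (t w) → v = w
  not_dvd_pencil : ∀ (v) (l : Option k), ¬ t (.inl v) ∣ pencil a b l
  dvd_pencil : ∀ i j, t (.inr ⟨i, j⟩) ∣ pencil a b (σ i)
  injective : Function.Injective σ
  exists_associated_of_not_dvd : ∀ p, Prime p → SetLike.IsHomogeneousElem 𝒜 p →
    (∀ l : Option k, ¬ p ∣ pencil a b l) → ∃ v, Associated p (t (.inl v))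
  exists_associated_of_dvd : ∀ p i, Prime p → p ∣ pencil a b (σ i) →
    ∃ j, Associated p (t (.inr ⟨i, j⟩))
  prime_of_notMem_range : ∀ l, l ∉ Set.range σ → Prime (pencil a b l)

theorem IsGeneratingPencil.exists_isPrimeSystem [IsAlgClosed k] [AddCommGroup ι] [DecidableEq ι]
    [AddGroup.FG ι] [IsAddTorsionFree ι] [IsDomain B] [UniqueFactorizationMonoid B]
    {𝒜 : ι → Submodule k B} [GradedAlgebra 𝒜] {g : ι} {a b : B} (P : IsGeneratingPencil 𝒜 g a b)
    {σ : I → Option k} (hσ : Function.Injective σ)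
    (hrange : {l : Option k | ¬ Prime (pencil a b l)} ⊆ Set.range σ) :
    ∃ (m : ℕ) (n : I → ℕ) (t : (Fin m ⊕ Σ i, Fin (n i)) → B), IsPrimeSystem 𝒜 a b σ t := by
  obtain ⟨m, free, hfree, free_assoc, exists_free⟩ :=
    exists_fin_forall_associated P.finite_associates_mk_image_setOf_not_dvd
  choose n div hdiv div_assoc exists_div using fun i => exists_fin_forall_associated
    (finite_associates_mk_image_setOf_prime_dvd (P.pencil_ne_zero (σ i)))
  refine ⟨m, n, Sum.elim free fun s => div s.1 s.2, ?_, ?_, ?_, ?_, ?_, hσ, ?_, ?_, ?_⟩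
  · rintro (v | ⟨i, j⟩)
    exacts [(hfree v).1, (hdiv i j).1]
  · rintro (v | ⟨i, j⟩)
    exacts [(hfree v).2.1, isHomogeneousElem_of_dvd ⟨g, P.member_mem (σ i)⟩
      (P.pencil_ne_zero (σ i)) (hdiv i j).2]
  · rintro (v | ⟨i, j⟩) (w | ⟨i', j'⟩) (hvw : Associated _ _)
    · rw [free_assoc v w hvw]
    · exact absurd (hvw.dvd.trans (hdiv i' j').2) ((hfree v).2.2 _)
    · exact absurd (hvw.dvd'.trans (hdiv i j).2) ((hfree w).2.2 _)
    · obtain rfl : i = i' := hσ (P.eq_of_dvd_of_dvd (hdiv i j).1 (hdiv i j).2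
        (hvw.dvd.trans (hdiv i' j').2))
      rw [div_assoc i j j' hvw]
  · exact fun v l => (hfree v).2.2 l
  · exact fun i j => (hdiv i j).2
  · exact fun p hp hhom hndvd => exists_free p ⟨hp, hhom, hndvd⟩
  · exact fun p i hp hpi => exists_div i p ⟨hp, hpi⟩
  · exact fun l hl => not_not.mp (mt (@hrange l) hl)

end PrimeSystem

section MonomialExponent

variable {I V : Type*} {J : I → Type*} [∀ i, Fintype (J i)]

/-- The exponent vector of the monomial `∏ j, t (inr ⟨i, j⟩) ^ β i j`. -/
noncomputable def monomialExponent (β : ∀ i, J i → ℕ) (i : I) : (V ⊕ Σ i, J i) →₀ ℕ :=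
  (Finsupp.equivFunOnFinite.symm (β i)).embDomain
    ((Function.Embedding.sigmaMk i).trans .inr)

theorem monomialExponent_apply_self (β : ∀ i, J i → ℕ) (i : I) (j : J i) :
    monomialExponent (V := V) β i (.inr ⟨i, j⟩) = β i j :=
  Finsupp.embDomain_apply_self _ _ j

theorem monomialExponent_le_iff {β : ∀ i, J i → ℕ} {i : I} {e : (V ⊕ Σ i, J i) →₀ ℕ} :
    monomialExponent β i ≤ e ↔ ∀ j, β i j ≤ e (.inr ⟨i, j⟩) := by
  refine ⟨fun h j => monomialExponent_apply_self (V := V) β i j ▸ h _, fun h v => ?_⟩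
  by_cases hv : v ∈ Set.range ((Function.Embedding.sigmaMk (β := J) i).trans .inr)
  · obtain ⟨j, rfl⟩ := hv
    exact (monomialExponent_apply_self β i j).le.trans (h j)
  · rw [monomialExponent, Finsupp.embDomain_of_notMem_range _ _ _ hv]
    exact Nat.zero_le _

theorem prod_monomialExponent {M : Type*} [CommMonoid M] (β : ∀ i, J i → ℕ) (i : I)
    (w : (V ⊕ Σ i, J i) → M) :
    ((monomialExponent β i).prod fun v n => w v ^ n) = ∏ j, w (.inr ⟨i, j⟩) ^ β i j := by
  rw [monomialExponent, Finsupp.prod_embDomain, Finsupp.prod_fintype _ _ fun _ => pow_zero _]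
  rfl

end MonomialExponent

theorem exists_forall_associated_prod_pow_eq [IsAlgClosed k] {B J : Type*} [CommRing B]
    [Algebra k B] [Fintype J] (hunits : ∀ u : B, IsUnit u → ∃ c : k, u = algebraMap k B c)
    {β : J → ℕ} {j₀ : J} (hβ : β j₀ ≠ 0) {x : J → B} {y : B}
    (h : Associated (∏ j, x j ^ β j) y) :
    ∃ x' : J → B, (∀ j, Associated (x j) (x' j)) ∧ ∏ j, x' j ^ β j = y := by
  classical
  obtain ⟨u, rfl⟩ := h
  obtain ⟨c, hc⟩ := hunits u u.isUnit
  obtain ⟨z, rfl⟩ := IsAlgClosed.exists_pow_nat_eq c (Nat.pos_of_ne_zero hβ)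
  have hz : IsUnit (algebraMap k B z) := by
    rw [← isUnit_pow_iff hβ, ← map_pow, ← hc]
    exact u.isUnit
  refine ⟨Function.update x j₀ (x j₀ * algebraMap k B z), fun j => ?_, ?_⟩
  · obtain rfl | hj := eq_or_ne j j₀
    · rw [Function.update_self]
      exact associated_mul_unit_right _ _ hz
    · rw [Function.update_of_ne hj]
  · rw [← Finset.mul_prod_erase _ _ (Finset.mem_univ j₀),
      ← Finset.mul_prod_erase _ (fun j => x j ^ β j) (Finset.mem_univ j₀),
      Function.update_self, hc, map_pow,
      Finset.prod_congr rfl fun j hj => by rw [Function.update_of_ne (Finset.ne_of_mem_erase hj)]]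
    ring

theorem eq_top_of_forall_homogeneous_prime_mem {ι B : Type*} [AddCommGroup ι] [DecidableEq ι]
    [TwoUniqueSums ι] [CommRing B] [IsDomain B] [UniqueFactorizationMonoid B] [Algebra k B]
    {𝒜 : ι → Submodule k B} [GradedAlgebra 𝒜]
    (hunits : ∀ u : B, IsUnit u → ∃ c : k, u = algebraMap k B c) {A : Subalgebra k B}
    (hA : ∀ p, Prime p → SetLike.IsHomogeneousElem 𝒜 p → p ∈ A) : A = ⊤ := by
  rw [eq_top_iff, ← adjoin_isHomogeneousElem_eq_top (𝒜 := 𝒜), Algebra.adjoin_le_iff]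
  intro x hx
  induction x using UniqueFactorizationMonoid.induction_on_prime with
  | h₁ => exact A.zero_mem
  | h₂ u hu =>
    obtain ⟨c, rfl⟩ := hunits u hu
    exact A.algebraMap_mem c
  | h₃ x p hx0 hp ih =>
    have hpx : p * x ≠ 0 := mul_ne_zero hp.ne_zero hx0
    exact A.mul_mem (hA p hp (isHomogeneousElem_of_dvd hx hpx (dvd_mul_right p x)))
      (ih (isHomogeneousElem_of_dvd hx hpx (dvd_mul_left x p)))

/-- The multiplicities of the primes `t (inr ⟨i, j⟩)` in the member at `σ i` of the pencil of `a`
and `b`: the exponents `β i j` of the trinomial data attached to a prime system. -/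
noncomputable def pencilExponent {B I V : Type*} {J : I → Type*} [CommRing B] [Algebra k B]
    (a b : B) (σ : I → Option k) (t : (V ⊕ Σ i, J i) → B) (i : I) (j : J i) : ℕ :=
  multiplicity (t (.inr ⟨i, j⟩)) (pencil a b (σ i))

namespace IsPrimeSystem

variable {ι B I V : Type*} {J : I → Type*} [CommRing B] [Algebra k B] {𝒜 : ι → Submodule k B}
  {a b : B} {σ : I → Option k} {t t' : (V ⊕ Σ i, J i) → B}

theorem of_associated (Y : IsPrimeSystem 𝒜 a b σ t)
    (hunits : ∀ u : B, IsUnit u → ∃ c : k, u = algebraMap k B c)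
    (h : ∀ v, Associated (t v) (t' v)) : IsPrimeSystem 𝒜 a b σ t' where
  prime v := (h v).prime (Y.prime v)
  isHomogeneousElem v := (Y.isHomogeneousElem v).imp fun _ => mem_of_associated hunits (h v)
  eq_of_associated v w hvw := Y.eq_of_associated v w ((h v).trans (hvw.trans (h w).symm))
  not_dvd_pencil v l hl := Y.not_dvd_pencil v l ((h _).dvd.trans hl)
  dvd_pencil i j := (h _).dvd'.trans (Y.dvd_pencil i j)
  injective := Y.injective
  exists_associated_of_not_dvd p hp hhom hndvd :=
    (Y.exists_associated_of_not_dvd p hp hhom hndvd).imp fun _ hv => hv.trans (h _)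
  exists_associated_of_dvd p i hp hpi :=
    (Y.exists_associated_of_dvd p i hp hpi).imp fun _ hj => hj.trans (h _)
  prime_of_notMem_range := Y.prime_of_notMem_range

theorem pencilExponent_pos (Y : IsPrimeSystem 𝒜 a b σ t) (i : I) (j : J i) :
    0 < pencilExponent a b σ t i j :=
  Nat.pos_of_ne_zero (multiplicity_ne_zero.mpr (Y.dvd_pencil i j))

theorem dvd_multiplicity_pencil (Y : IsPrimeSystem 𝒜 a b σ t) {i : I} {q : ℕ}
    (hq : ∀ j, q ∣ pencilExponent a b σ t i j) {p : B} (hp : Prime p) :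
    q ∣ multiplicity p (pencil a b (σ i)) := by
  by_cases hpi : p ∣ pencil a b (σ i)
  · obtain ⟨j, hj⟩ := Y.exists_associated_of_dvd p i hp hpi
    rw [← multiplicity_eq_of_associated_left hj]
    exact hq j
  · rw [multiplicity_eq_zero.mpr hpi]
    exact dvd_zero q

variable [AddCommGroup ι] [DecidableEq ι] [IsDomain B] [UniqueFactorizationMonoid B]
  [GradedAlgebra 𝒜] {g : ι}

theorem nonempty (Y : IsPrimeSystem 𝒜 a b σ t) (P : IsGeneratingPencil 𝒜 g a b)
    (hunits : ∀ u : B, IsUnit u → ∃ c : k, u = algebraMap k B c) (i : I) : Nonempty (J i) := by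
  obtain ⟨p, hp, hpi⟩ := P.exists_prime_dvd hunits (σ i)
  exact (Y.exists_associated_of_dvd p i hp hpi).nonempty

section Fintype

variable [∀ i, Fintype (J i)]

theorem associated_prod_pow_pencilExponent (Y : IsPrimeSystem 𝒜 a b σ t)
    (P : IsGeneratingPencil 𝒜 g a b) (i : I) :
    Associated (∏ j, t (.inr ⟨i, j⟩) ^ pencilExponent a b σ t i j) (pencil a b (σ i)) := by
  refine associated_of_forall_multiplicity_eq
    (Finset.prod_ne_zero_iff.mpr fun j _ => pow_ne_zero _ (Y.prime _).ne_zero)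
    (P.pencil_ne_zero _) fun p hp => ?_
  by_cases hpi : p ∣ pencil a b (σ i)
  · obtain ⟨j, hj⟩ := Y.exists_associated_of_dvd p i hp hpi
    rw [← multiplicity_eq_of_associated_left hj, ← multiplicity_eq_of_associated_left hj,
      ← prod_monomialExponent, multiplicity_self_finsupp_prod_pow Y.prime Y.eq_of_associated,
      monomialExponent_apply_self, pencilExponent]
  · rw [multiplicity_eq_zero.mpr hpi, multiplicity_eq_zero, hp.dvd_finsetProd_iff]
    rintro ⟨j, -, hj⟩
    exact hpi ((hp.dvd_of_dvd_pow hj).trans (Y.dvd_pencil i j))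

theorem exists_isPrimeSystem_prod_pow_eq_smul [IsAlgClosed k] (Y : IsPrimeSystem 𝒜 a b σ t)
    (P : IsGeneratingPencil 𝒜 g a b)
    (hunits : ∀ u : B, IsUnit u → ∃ c : k, u = algebraMap k B c) {κ : I → k}
    (hκ : ∀ i, κ i ≠ 0) :
    ∃ t' : (V ⊕ Σ i, J i) → B, IsPrimeSystem 𝒜 a b σ t' ∧
      ∀ i, ∏ j, t' (.inr ⟨i, j⟩) ^ pencilExponent a b σ t' i j = κ i • pencil a b (σ i) := by
  have hassoc : ∀ i, Associated (∏ j, t (.inr ⟨i, j⟩) ^ pencilExponent a b σ t i j)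
      (κ i • pencil a b (σ i)) := fun i => by
    rw [Algebra.smul_def, mul_comm]
    exact (Y.associated_prod_pow_pencilExponent P i).trans
      (associated_mul_unit_right _ _ ((IsUnit.mk0 _ (hκ i)).map _))
  choose s hs hprod using fun i => exists_forall_associated_prod_pow_eq hunits
    (Y.pencilExponent_pos i (Y.nonempty P hunits i).some).ne' (hassoc i)
  have ht : ∀ v, Associated (t v) (Sum.elim (t ∘ .inl) (fun v => s v.1 v.2) v) := by
    rintro (v | ⟨i, j⟩)
    exacts [.refl _, hs i j]
  refine ⟨_, Y.of_associated hunits ht, fun i => ?_⟩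
  rw [← hprod i]
  refine Finset.prod_congr rfl fun j _ => congrArg _ ?_
  exact multiplicity_eq_of_associated_left (hs i j)

end Fintype

theorem adjoin_range_eq_top [TwoUniqueSums ι] [∀ i, Finite (J i)]
    (Y : IsPrimeSystem 𝒜 a b σ t) (P : IsGeneratingPencil 𝒜 g a b)
    (hunits : ∀ u : B, IsUnit u → ∃ c : k, u = algebraMap k B c) {i₀ i₁ : I} (hi : i₀ ≠ i₁) :
    Algebra.adjoin k (Set.range t) = ⊤ := by
  have := fun i => Fintype.ofFinite (J i)
  set A := Algebra.adjoin k (Set.range t)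
  have mem_of_assoc : ∀ {x y : B}, Associated x y → y ∈ A → x ∈ A := fun hxy hy =>
    mem_of_associated (S := Subalgebra.toSubmodule A) hunits hxy.symm hy
  have ht : ∀ v, t v ∈ A := fun v => Algebra.subset_adjoin ⟨v, rfl⟩
  have hσ : ∀ i, pencil a b (σ i) ∈ A := fun i =>
    mem_of_assoc (Y.associated_prod_pow_pencilExponent P i).symm
      (prod_mem fun j _ => pow_mem (ht _) _)
  have hmember : ∀ l : Option k, pencil a b l ∈ A := fun l => by
    obtain ⟨x, y, hxy⟩ := exists_smul_add_smul_eq_pencil (a := a) (b := b) (Y.injective.ne hi) l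
    rw [← hxy]
    exact add_mem (A.smul_mem (hσ i₀) x) (A.smul_mem (hσ i₁) y)
  refine eq_top_of_forall_homogeneous_prime_mem (𝒜 := 𝒜) hunits fun p hp hhom => ?_
  by_cases hndvd : ∀ l : Option k, ¬ p ∣ pencil a b l
  · obtain ⟨v, hv⟩ := Y.exists_associated_of_not_dvd p hp hhom hndvd
    exact mem_of_assoc hv (ht _)
  push Not at hndvd
  obtain ⟨l, hl⟩ := hndvd
  by_cases hlσ : l ∈ Set.range σ
  · obtain ⟨i, rfl⟩ := hlσ
    obtain ⟨j, hj⟩ := Y.exists_associated_of_dvd p i hp hl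
    exact mem_of_assoc hj (ht _)
  · exact mem_of_assoc (hp.associated_of_dvd (Y.prime_of_notMem_range l hlσ) hl) (hmember l)

end IsPrimeSystem

/-! ### Standard monomials -/

section LinearIndependence

variable {B T : Type*} [CommRing B] [Algebra k B] {x : T → B}

theorem linearIndepOn_of_injOn_multiplicity [IsDomain B] [WfDvdMonoid B] {p : B}
    (hp : Prime p) {s : Set T} (hx : ∀ i ∈ s, x i ≠ 0)
    (hinj : s.InjOn fun i => multiplicity p (x i)) : LinearIndepOn k x s := by
  classical
  rw [linearIndepOn_iff']
  intro t c hts hsum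
  by_contra! hc
  obtain ⟨i₀, hi₀⟩ := hc
  obtain ⟨i, hi, hmin⟩ := {i ∈ t | c i ≠ 0}.exists_min_image (fun i => multiplicity p (x i))
    ⟨i₀, Finset.mem_filter.mpr hi₀⟩
  obtain ⟨hit, hci⟩ := Finset.mem_filter.mp hi
  have hdvd_rest : ∀ j ∈ t.erase i, p ^ (multiplicity p (x i) + 1) ∣ c j • x j := fun j hj => by
    obtain ⟨hji, hjt⟩ := Finset.mem_erase.mp hj
    by_cases hcj : c j = 0
    · rw [hcj, zero_smul]
      exact dvd_zero _
    · have hle := hmin j (Finset.mem_filter.mpr ⟨hjt, hcj⟩)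
      have hne : multiplicity p (x i) ≠ multiplicity p (x j) := fun h =>
        hji (hinj (hts hjt) (hts hit) h.symm)
      exact dvd_smul_of_dvd _ (pow_dvd_of_le_multiplicity (hle.lt_of_ne hne))
  have hdvd : p ^ (multiplicity p (x i) + 1) ∣ c i • x i := by
    rw [← Finset.add_sum_erase t _ hit] at hsum
    rw [eq_neg_of_add_eq_zero_left hsum, dvd_neg]
    exact Finset.dvd_sum hdvd_rest
  refine (FiniteMultiplicity.of_not_isUnit hp.not_isUnit
    (hx i (hts hit))).not_pow_dvd_of_multiplicity_lt (Nat.lt_succ_self _) ?_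
  simpa only [inv_smul_smul₀ hci] using dvd_smul_of_dvd (c i)⁻¹ hdvd

theorem linearIndependent_of_forall_degree {ι : Type*} [AddCommGroup ι] [DecidableEq ι]
    {𝒜 : ι → Submodule k B} [GradedAlgebra 𝒜] {deg : T → ι} (hdeg : ∀ i, x i ∈ 𝒜 (deg i))
    (h : ∀ d, LinearIndepOn k x (deg ⁻¹' {d})) : LinearIndependent k x := by
  rw [linearIndependent_iff']
  intro s c hsum i hi
  refine linearIndepOn_iff'.mp (h (deg i)) {j ∈ s | deg j = deg i} c
    (fun j hj => (Finset.mem_filter.mp hj).2)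
    (sum_filter_degree_eq_zero (fun j _ => Submodule.smul_mem _ (c j) (hdeg j)) hsum _) i
    (Finset.mem_filter.mpr ⟨hi, rfl⟩)

end LinearIndependence

section Span

variable {W T I : Type*} [CommRing W] [Algebra k W] {w : T → W}

theorem finsupp_prod_pow_mem_span (ω : (T →₀ ℕ) →+ ℕ) {lead : I → T →₀ ℕ} {S : Set I}
    (hlead : ∀ i ∈ S, ((lead i).prod fun v n => w v ^ n) ∈
      Submodule.span k ((fun e : T →₀ ℕ => e.prod fun v n => w v ^ n) '' {e | ω e < ω (lead i)}))
    (e : T →₀ ℕ) : (e.prod fun v n => w v ^ n) ∈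
      Submodule.span k (Set.range fun e : {e : T →₀ ℕ // ∀ i ∈ S, ¬ lead i ≤ e} =>
        e.1.prod fun v n => w v ^ n) := by
  set Q := Submodule.span k (Set.range fun e : {e : T →₀ ℕ // ∀ i ∈ S, ¬ lead i ≤ e} =>
    e.1.prod fun v n => w v ^ n)
  induction he : ω e using Nat.strong_induction_on generalizing e with
  | _ N ih =>
  by_cases hstd : ∀ i ∈ S, ¬ lead i ≤ e
  · exact Submodule.subset_span ⟨⟨e, hstd⟩, rfl⟩
  push Not at hstd
  obtain ⟨i, hi, hle⟩ := hstd
  obtain ⟨f, rfl⟩ := exists_add_of_le hle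
  have hadd : ∀ e e' : T →₀ ℕ, ((e + e').prod fun v n => w v ^ n) =
      (e.prod fun v n => w v ^ n) * e'.prod fun v n => w v ^ n := fun e e' =>
    Finsupp.prod_add_index' (fun _ => pow_zero _) fun _ => pow_add _
  have hsub : Submodule.span k ((fun e : T →₀ ℕ => e.prod fun v n => w v ^ n) ''
      {e | ω e < ω (lead i)}) ≤ Q.comap (LinearMap.mulRight k (f.prod fun v n => w v ^ n)) := by
    rw [Submodule.span_le]
    rintro _ ⟨e', he', rfl⟩
    rw [SetLike.mem_coe, Submodule.mem_comap, LinearMap.mulRight_apply, ← hadd]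
    refine ih _ ?_ _ rfl
    rw [← he, map_add, map_add]
    exact Nat.add_lt_add_right he' _
  rw [hadd]
  exact hsub (hlead i hi)

theorem span_range_finsupp_prod_pow_eq_top (hw : Algebra.adjoin k (Set.range w) = ⊤) :
    Submodule.span k (Set.range fun e : T →₀ ℕ => e.prod fun v n => w v ^ n) = ⊤ := by
  rw [eq_top_iff]
  rintro z -
  obtain ⟨q, rfl⟩ : z ∈ (aeval w : MvPolynomial T k →ₐ[k] W).range := by
    rw [← Algebra.adjoin_range_eq_range_aeval, hw]
    exact Algebra.mem_top
  rw [q.as_sum, map_sum]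
  refine Submodule.sum_mem _ fun e _ => ?_
  rw [AlgHom.toRingHom_eq_coe, RingHom.coe_coe, aeval_monomial, ← Algebra.smul_def]
  exact Submodule.smul_mem _ _ (Submodule.subset_span ⟨e, rfl⟩)

end Span

section StandardExponent

variable {I V : Type*} {J : I → Type*} [∀ i, Fintype (J i)]

/-- An exponent vector is standard with respect to `i₀` and `i₁` if its monomial is divisible by
none of the monomials `∏ j, t (inr ⟨i, j⟩) ^ β i j` with `i ≠ i₀, i₁`, the leading monomials of
the trinomial relations. -/
def IsStandardExponent (β : ∀ i, J i → ℕ) (i₀ i₁ : I) (e : (V ⊕ Σ i, J i) →₀ ℕ) : Prop :=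
  ∀ i ∈ ({i₀, i₁}ᶜ : Set I), ¬ monomialExponent β i ≤ e

/- Each relation replaces a monomial by monomials of smaller degree in the variables
`inr ⟨i, j⟩` with `i ≠ i₀, i₁`. -/
theorem span_standard_monomials_eq_top {W : Type*} [CommRing W] [Algebra k W]
    {w : (V ⊕ Σ i, J i) → W} (hw : Algebra.adjoin k (Set.range w) = ⊤) {β : ∀ i, J i → ℕ}
    (hβ : ∀ i, 0 < ∑ j, β i j) {i₀ i₁ : I}
    (hrel : ∀ i ∈ ({i₀, i₁}ᶜ : Set I), ∃ x y : k, ∏ j, w (.inr ⟨i, j⟩) ^ β i j =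
      x • ∏ j, w (.inr ⟨i₀, j⟩) ^ β i₀ j + y • ∏ j, w (.inr ⟨i₁, j⟩) ^ β i₁ j) :
    Submodule.span k (Set.range fun e : {e // IsStandardExponent β i₀ i₁ e} =>
      e.1.prod fun v n => w v ^ n) = ⊤ := by
  classical
  let ω : ((V ⊕ Σ i, J i) →₀ ℕ) →ₗ[ℕ] ℕ := Finsupp.linearCombination ℕ
    (Sum.elim 0 fun v => if v.1 ∈ ({i₀, i₁} : Set I) then 0 else 1)
  have hω : ∀ i, ω (monomialExponent β i) =
      if i ∈ ({i₀, i₁} : Set I) then 0 else ∑ j, β i j := fun i => by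
    rw [monomialExponent, Finsupp.linearCombination_embDomain, Finsupp.linearCombination_apply,
      Finsupp.sum_fintype _ _ (by simp)]
    simp [-Set.mem_insert_iff, -Set.mem_singleton_iff]
  have hlt : ∀ i ∈ ({i₀, i₁}ᶜ : Set I), ∀ i' ∈ ({i₀, i₁} : Set I),
      ω (monomialExponent β i') < ω (monomialExponent β i) := fun i hi i' hi' => by
    rw [hω, hω, if_pos hi', if_neg hi]
    exact hβ i
  rw [eq_top_iff, ← span_range_finsupp_prod_pow_eq_top hw, Submodule.span_le]
  rintro _ ⟨e, rfl⟩
  refine finsupp_prod_pow_mem_span (S := {i₀, i₁}ᶜ) ω.toAddMonoidHom (fun i hi => ?_) e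
  obtain ⟨x, y, hxy⟩ := hrel i hi
  rw [prod_monomialExponent, hxy]
  exact add_mem
    (Submodule.smul_mem _ x (Submodule.subset_span
      ⟨_, hlt i hi i₀ (Set.mem_insert _ _), prod_monomialExponent β i₀ w⟩))
    (Submodule.smul_mem _ y (Submodule.subset_span
      ⟨_, hlt i hi i₁ (Set.mem_insert_of_mem _ rfl), prod_monomialExponent β i₁ w⟩))

end StandardExponent

theorem finsupp_eq_zero_of_degree_eq_zero {α M : Type*} [AddCommMonoid M] {D : α →₀ M}
    (hD : D.degree = 0) {a : α} (h : ∀ l, l ≠ a → D l = 0) : D = 0 := by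
  have hsingle : D = Finsupp.single a (D a) :=
    Finsupp.support_subset_singleton.mp fun l hl =>
      Finset.mem_singleton.mpr (not_imp_comm.mp (h l) (Finsupp.mem_support_iff.mp hl))
  rw [hsingle, Finsupp.degree_single] at hD
  rw [hsingle, hD, Finsupp.single_zero]

theorem eq_zero_of_forall_eq_add_mul {J : Type*} {u u' β : J → ℕ} {c : ℤ}
    (h : ∀ j, (u j : ℤ) = u' j + c * β j) (hu : ∃ j, u j < β j) (hu' : ∃ j, u' j < β j) :
    c = 0 := by
  obtain ⟨j, hj⟩ := hu
  obtain ⟨j', hj'⟩ := hu'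
  have hj := h j
  have hj' := h j'
  rcases lt_trichotomy c 0 with hc | hc | hc
  · nlinarith
  · exact hc
  · nlinarith

namespace IsPrimeSystem

variable {ι B I V : Type*} {J : I → Type*} [CommRing B] [IsDomain B] [Algebra k B]
  [AddCommGroup ι] [DecidableEq ι] {𝒜 : ι → Submodule k B} [GradedAlgebra 𝒜] {g : ι} {a b : B}
  {σ : I → Option k} {t : (V ⊕ Σ i, J i) → B}

theorem not_dvd_of_dvd_pencil (Y : IsPrimeSystem 𝒜 a b σ t) (P : IsGeneratingPencil 𝒜 g a b)
    {l : Option k} (hl : l ∉ Set.range σ) {p : B} (hp : Prime p) (hpl : p ∣ pencil a b l) :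
    ∀ v, ¬ p ∣ t v
  | .inl v, h => Y.not_dvd_pencil v l ((hp.associated_of_dvd (Y.prime _) h).dvd'.trans hpl)
  | .inr ⟨i, j⟩, h => hl ⟨i, P.eq_of_dvd_of_dvd hp (h.trans (Y.dvd_pencil i j)) hpl⟩

variable [IsAlgClosed k] [UniqueFactorizationMonoid B] [∀ i, Fintype (J i)]

/- The quotient of the two monomials has a divisor of degree zero on the pencil; it vanishes away
from `σ i₁`, hence everywhere. -/
theorem eq_of_isStandardExponent (Y : IsPrimeSystem 𝒜 a b σ t) (P : IsGeneratingPencil 𝒜 g a b)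
    (hunits : ∀ u : B, IsUnit u → ∃ c : k, u = algebraMap k B c) {i₀ i₁ : I} (j₀ : J i₀)
    {e e' : (V ⊕ Σ i, J i) →₀ ℕ} (he : IsStandardExponent (pencilExponent a b σ t) i₀ i₁ e)
    (he' : IsStandardExponent (pencilExponent a b σ t) i₀ i₁ e') {h : ι}
    (hmem : (e.prod fun v n => t v ^ n) ∈ 𝒜 h) (hmem' : (e'.prod fun v n => t v ^ n) ∈ 𝒜 h)
    (heq : e (.inr ⟨i₀, j₀⟩) = e' (.inr ⟨i₀, j₀⟩)) : e = e' := by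
  have ht0 : ∀ v, t v ≠ 0 := fun v => (Y.prime v).ne_zero
  have hself := multiplicity_self_finsupp_prod_pow Y.prime Y.eq_of_associated
  obtain ⟨D, hdegree, hD, hD'⟩ := P.exists_divisor hmem hmem' (finsupp_prod_pow_ne_zero ht0 e)
    (finsupp_prod_pow_ne_zero ht0 e')
  have hDσ : ∀ i j, (e (.inr ⟨i, j⟩) : ℤ) =
      e' (.inr ⟨i, j⟩) + D (σ i) * pencilExponent a b σ t i j := fun i j => by
    rw [← hself e, ← hself e']
    exact hD (σ i) _ (Y.prime _) (Y.dvd_pencil i j)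
  have hD_off : ∀ l, l ≠ σ i₁ → D l = 0 := fun l hl => by
    by_cases hlσ : l ∈ Set.range σ
    · obtain ⟨i, rfl⟩ := hlσ
      obtain rfl | hi := eq_or_ne i i₀
      · simpa [heq, (Y.pencilExponent_pos i j₀).ne'] using hDσ i j₀
      · have hi' : i ∈ ({i₀, i₁}ᶜ : Set I) := fun h => h.elim hi fun h => hl (h ▸ rfl)
        refine eq_zero_of_forall_eq_add_mul (hDσ i) ?_ ?_
        · simpa [monomialExponent_le_iff] using he i hi'
        · simpa [monomialExponent_le_iff] using he' i hi'
    · obtain ⟨p, hp, hpl⟩ := P.exists_prime_dvd hunits l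
      have hndvd := Y.not_dvd_of_dvd_pencil P hlσ hp hpl
      have hDl := hD l p hp hpl
      rw [multiplicity_finsupp_prod_pow_of_not_dvd hp ht0 hndvd,
        multiplicity_finsupp_prod_pow_of_not_dvd hp ht0 hndvd] at hDl
      simpa [multiplicity_eq_zero, hpl] using hDl
  have hD_zero : D = 0 := finsupp_eq_zero_of_degree_eq_zero hdegree hD_off
  ext v
  obtain v | ⟨i, j⟩ := v
  · rw [← hself e, ← hself e', hD' _ (Y.prime _) (Y.not_dvd_pencil v)]
  · simpa [hD_zero] using hDσ i j

theorem linearIndependent_standard_monomials (Y : IsPrimeSystem 𝒜 a b σ t)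
    (P : IsGeneratingPencil 𝒜 g a b)
    (hunits : ∀ u : B, IsUnit u → ∃ c : k, u = algebraMap k B c) (i₀ i₁ : I) :
    LinearIndependent k fun e : {e // IsStandardExponent (pencilExponent a b σ t) i₀ i₁ e} =>
      e.1.prod fun v n => t v ^ n := by
  choose deg hdeg using Y.isHomogeneousElem
  obtain ⟨j₀⟩ := Y.nonempty P hunits i₀
  have hmem := finsupp_prod_pow_mem_graded hdeg
  refine linearIndependent_of_forall_degree (fun e => hmem e.1) fun d =>
    linearIndepOn_of_injOn_multiplicity (Y.prime (.inr ⟨i₀, j₀⟩))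
      (fun e _ => finsupp_prod_pow_ne_zero (fun v => (Y.prime v).ne_zero) e.1) ?_
  rintro e rfl e' he' hee'
  simp only [Set.mem_preimage, Set.mem_singleton_iff,
    multiplicity_self_finsupp_prod_pow Y.prime Y.eq_of_associated] at he' hee'
  exact Subtype.ext (Y.eq_of_isStandardExponent P hunits j₀ e.2 e'.2 (hmem e.1)
    (he' ▸ hmem e'.1) hee')

theorem nonempty_algEquiv [TwoUniqueSums ι] (Y : IsPrimeSystem 𝒜 a b σ t)
    (P : IsGeneratingPencil 𝒜 g a b)
    (hunits : ∀ u : B, IsUnit u → ∃ c : k, u = algebraMap k B c) {i₀ i₁ : I} (hi : i₀ ≠ i₁)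
    {W : Type*} [CommRing W] [Algebra k W] {w : (V ⊕ Σ i, J i) → W}
    (hw : Algebra.adjoin k (Set.range w) = ⊤)
    (hrel : ∀ i ∈ ({i₀, i₁}ᶜ : Set I), ∃ x y : k,
      ∏ j, w (.inr ⟨i, j⟩) ^ pencilExponent a b σ t i j =
        x • ∏ j, w (.inr ⟨i₀, j⟩) ^ pencilExponent a b σ t i₀ j +
          y • ∏ j, w (.inr ⟨i₁, j⟩) ^ pencilExponent a b σ t i₁ j)
    (Φ : W →ₐ[k] B) (hΦ : ∀ v, Φ (w v) = t v) : Nonempty (B ≃ₐ[k] W) := by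
  have hβ : ∀ i, 0 < ∑ j, pencilExponent a b σ t i j := fun i =>
    Finset.sum_pos (fun j _ => Y.pencilExponent_pos i j)
      (Finset.univ_nonempty_iff.mpr (Y.nonempty P hunits i))
  have hinj : Function.Injective Φ.toLinearMap := by
    refine LinearMap.injective_of_linearIndependent (span_standard_monomials_eq_top hw hβ hrel) ?_
    simpa only [Function.comp_def, AlgHom.toLinearMap_apply, Finsupp.prod, map_prod, map_pow, hΦ]
      using Y.linearIndependent_standard_monomials P hunits i₀ i₁
  have hsurj : Function.Surjective Φ := by
    rw [← AlgHom.range_eq_top, eq_top_iff, ← Y.adjoin_range_eq_top P hunits hi,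
      Algebra.adjoin_le_iff]
    rintro _ ⟨v, rfl⟩
    exact ⟨w v, hΦ v⟩
  exact ⟨(AlgEquiv.ofBijective Φ ⟨hinj, hsurj⟩).symm⟩

end IsPrimeSystem

/-! ### The presentation by trinomial data -/

namespace TrinomialData

/-- The generators of the polynomial ring in the variables `V` over `k[Δ]`. -/
noncomputable def generator (Δ : TrinomialData k) (V : Type*) :
    (V ⊕ Σ i, Fin (Δ.n i)) → MvPolynomial V Δ.Ring :=
  Sum.elim X fun v => C (Ideal.Quotient.mk Δ.relIdeal (X (v : Δ.Vars)))

variable (Δ : TrinomialData k) {V : Type*}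

theorem adjoin_range_generator : Algebra.adjoin k (Set.range (Δ.generator V)) = ⊤ := by
  set A := Algebra.adjoin k (Set.range (Δ.generator V))
  have generator_mem : ∀ v, Δ.generator V v ∈ A := fun v => Algebra.subset_adjoin ⟨v, rfl⟩
  have C_mem : ∀ q, C (Ideal.Quotient.mk Δ.relIdeal q) ∈ A := fun q => by
    induction q using MvPolynomial.induction_on with
    | C c => exact A.algebraMap_mem c
    | add p q hp hq => simpa only [map_add] using add_mem hp hq
    | mul_X p v hp =>
      rw [map_mul, map_mul]
      exact mul_mem hp (generator_mem (.inr v))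
  refine eq_top_iff.mpr fun z _ => ?_
  induction z using MvPolynomial.induction_on with
  | C c =>
    obtain ⟨q, rfl⟩ := Ideal.Quotient.mk_surjective c
    exact C_mem q
  | add p q hp hq => exact add_mem (hp trivial) (hq trivial)
  | mul_X p v hp => exact mul_mem (hp trivial) (generator_mem (.inl v))

theorem map_mon {F A : Type*} [CommMonoid A] [FunLike F (MvPolynomial Δ.Vars k) A]
    [MonoidHomClass F (MvPolynomial Δ.Vars k) A] (f : F) (i : Fin (Δ.r + 1)) :
    f (Δ.mon i) = ∏ j, f (X ⟨i, j⟩) ^ Δ.β i j :=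
  (map_prod f _ _).trans (Finset.prod_congr rfl fun _ _ => map_pow f _ _)

theorem prod_generator_pow (i : Fin (Δ.r + 1)) :
    ∏ j, Δ.generator V (.inr ⟨i, j⟩) ^ Δ.β i j = C (Ideal.Quotient.mk Δ.relIdeal (Δ.mon i)) := by
  rw [map_mon, map_prod]
  refine Finset.prod_congr rfl fun j _ => ?_
  rw [map_pow]
  rfl

theorem mk_mon {i : Fin (Δ.r + 1)} (hi : 2 ≤ (i : ℕ)) :
    Ideal.Quotient.mk Δ.relIdeal (Δ.mon i) = (-1 : k) • Ideal.Quotient.mk Δ.relIdeal (Δ.mon 0) +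
      (-Δ.lam i) • Ideal.Quotient.mk Δ.relIdeal (Δ.mon 1) := by
  have hzero : Ideal.Quotient.mk Δ.relIdeal (Δ.mon 0 + C (Δ.lam i) * Δ.mon 1 + Δ.mon i) = 0 :=
    Ideal.Quotient.eq_zero_iff_mem.mpr (Ideal.subset_span ⟨i, hi, rfl⟩)
  rw [map_add, map_add, ← smul_eq_C_mul] at hzero
  rw [eq_neg_of_add_eq_zero_right hzero, neg_smul, one_smul, neg_smul, neg_add]
  rfl

theorem prod_generator_pow_eq {i : Fin (Δ.r + 1)} (hi : 2 ≤ (i : ℕ)) :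
    ∏ j, Δ.generator V (.inr ⟨i, j⟩) ^ Δ.β i j =
      (-1 : k) • ∏ j, Δ.generator V (.inr ⟨0, j⟩) ^ Δ.β 0 j +
        (-Δ.lam i) • ∏ j, Δ.generator V (.inr ⟨1, j⟩) ^ Δ.β 1 j := by
  have C_smul : ∀ (c : k) (x : Δ.Ring), (C (c • x) : MvPolynomial V Δ.Ring) = c • C x :=
    map_smul (IsScalarTower.toAlgHom k Δ.Ring (MvPolynomial V Δ.Ring))
  rw [prod_generator_pow, prod_generator_pow, prod_generator_pow, Δ.mk_mon hi, map_add, C_smul,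
    C_smul]

variable {B : Type*} [CommRing B] [Algebra k B]

theorem exists_algHom_generator_eq {t : (V ⊕ Σ i, Fin (Δ.n i)) → B}
    (hrel : ∀ i : Fin (Δ.r + 1), 2 ≤ (i : ℕ) → ∏ j, t (.inr ⟨0, j⟩) ^ Δ.β 0 j +
      Δ.lam i • ∏ j, t (.inr ⟨1, j⟩) ^ Δ.β 1 j + ∏ j, t (.inr ⟨i, j⟩) ^ Δ.β i j = 0) :
    ∃ Φ : MvPolynomial V Δ.Ring →ₐ[k] B, ∀ v, Φ (Δ.generator V v) = t v := by
  let f : MvPolynomial Δ.Vars k →ₐ[k] B := aeval fun v => t (.inr v)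
  have hf_mon : ∀ i, f (Δ.mon i) = ∏ j, t (.inr ⟨i, j⟩) ^ Δ.β i j := fun i => by
    rw [map_mon]
    exact Finset.prod_congr rfl fun j _ => congrArg (· ^ Δ.β i j) (aeval_X _ _)
  have hf : Δ.relIdeal ≤ RingHom.ker f := by
    rw [relIdeal, Ideal.span_le]
    rintro _ ⟨i, hi, rfl⟩
    rw [SetLike.mem_coe, RingHom.mem_ker, map_add, map_add, ← smul_eq_C_mul, map_smul, hf_mon,
      hf_mon, hf_mon, hrel i hi]
  refine ⟨aevalTower (Ideal.Quotient.liftₐ Δ.relIdeal f hf) (t ∘ .inl), ?_⟩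
  rintro (v | v)
  · exact aevalTower_X _ _ v
  · exact (aevalTower_C _ _ _).trans (aeval_X _ _)

variable (k) in
/-- The trinomial data with `r = 1` and both monomials of degree one; its ring is the polynomial
ring in two variables. -/
def plane : TrinomialData k where
  r := 1
  one_le_r := le_rfl
  n _ := 1
  one_le_n _ := le_rfl
  two_le_total := by simp
  β _ _ := 1
  β_pos _ _ := one_pos
  gcd_coprime i j _ := by simp
  lam _ := 0
  lam_ne_zero i hi := absurd i.2 (by omega)
  lam_injOn i j hi := absurd i.2 (by omega)

theorem relIdeal_plane : (plane k).relIdeal = ⊥ := by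
  rw [relIdeal, Ideal.span_eq_bot]
  rintro _ ⟨i, hi, -⟩
  exact absurd i.2 (Nat.not_lt.mpr hi)

theorem reduced_plane : (plane k).Reduced := .inl ⟨rfl, rfl, rfl⟩

theorem exists_nonempty_algEquiv_plane (V : Type*) [Fintype V] (hV : 2 ≤ Fintype.card V) :
    ∃ m : ℕ, Nonempty (MvPolynomial V k ≃ₐ[k] MvPolynomial (Fin m) (plane k).Ring) := by
  have ring_equiv : MvPolynomial (plane k).Vars k ≃ₐ[k] (plane k).Ring :=
    ((Ideal.quotientEquivAlgOfEq k relIdeal_plane).trans (AlgEquiv.quotientBot k _)).symm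
  let : Fintype (plane k).Vars := inferInstanceAs (Fintype (Σ _ : Fin 2, Fin 1))
  have card_vars : Fintype.card (plane k).Vars = 2 := rfl
  have vars_equiv : V ≃ Fin (Fintype.card V - 2) ⊕ (plane k).Vars := Fintype.equivOfCardEq <| by
    rw [Fintype.card_sum, card_vars, Fintype.card_fin, Nat.sub_add_cancel hV]
  exact ⟨_, ⟨((renameEquiv k vars_equiv).trans (sumAlgEquiv k _ _)).trans
    (mapAlgEquiv _ ring_equiv)⟩⟩

end TrinomialData

/-! ### Classification -/

theorem IsGeneratingPencil.ne_zero_of_smul_add_smul_eq {ι B : Type*} [AddCommGroup ι]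
    [DecidableEq ι] [CommRing B] [IsDomain B] [Algebra k B] {𝒜 : ι → Submodule k B}
    [GradedAlgebra 𝒜] {g : ι} {a b : B} (P : IsGeneratingPencil 𝒜 g a b)
    (hunits : ∀ u : B, IsUnit u → ∃ c : k, u = algebraMap k B c) {l m n : Option k} (hnm : n ≠ m)
    {x y : k} (h : x • pencil a b l + y • pencil a b m = pencil a b n) : x ≠ 0 := by
  rintro rfl
  rw [zero_smul, zero_add] at h
  exact hnm (eq_of_dvd_pencil_of_dvd_pencil P.isRelPrime (P.not_isUnit hunits m)
    (h ▸ dvd_smul_of_dvd y dvd_rfl) dvd_rfl)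

theorem card_le_sum_of_forall_one_le {J : Type*} [Fintype J] {n : J → ℕ} (hn : ∀ j, 1 ≤ n j) :
    Fintype.card J ≤ ∑ j, n j := by
  rw [Fintype.card_eq_sum_ones]
  exact Finset.sum_le_sum fun j _ => hn j

namespace IsPrimeSystem

section Exponents

variable {ι B I V : Type*} {J : I → Type*} [CommRing B] [IsDomain B] [Algebra k B]
  [UniqueFactorizationMonoid B] [AddCommGroup ι] [DecidableEq ι] {𝒜 : ι → Submodule k B}
  [GradedAlgebra 𝒜] {g : ι} {a b : B} {σ : I → Option k} {t : (V ⊕ Σ i, J i) → B}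
  [∀ i, Fintype (J i)]

theorem coprime_gcd_pencilExponent [IsAlgClosed k] [AddGroup.FG ι] [IsAddTorsionFree ι]
    (Y : IsPrimeSystem 𝒜 a b σ t) (P : IsGeneratingPencil 𝒜 g a b)
    (hunits : ∀ u : B, IsUnit u → ∃ c : k, u = algebraMap k B c) {i i' : I} (hi : i ≠ i') :
    (Finset.univ.gcd (pencilExponent a b σ t i)).Coprime
      (Finset.univ.gcd (pencilExponent a b σ t i')) :=
  P.eq_one_of_forall_dvd_multiplicity hunits (Y.injective.ne hi)
    (fun _ => Y.dvd_multiplicity_pencil fun j =>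
      (Nat.gcd_dvd_left _ _).trans (Finset.gcd_dvd (Finset.mem_univ j)))
    (fun _ => Y.dvd_multiplicity_pencil fun j =>
      (Nat.gcd_dvd_right _ _).trans (Finset.gcd_dvd (Finset.mem_univ j)))

theorem eq_of_prod_pow_pencilExponent_eq (Y : IsPrimeSystem 𝒜 a b σ t)
    (P : IsGeneratingPencil 𝒜 g a b)
    (hunits : ∀ u : B, IsUnit u → ∃ c : k, u = algebraMap k B c) {i i' : I}
    (h : ∏ j, t (.inr ⟨i, j⟩) ^ pencilExponent a b σ t i j =
      ∏ j, t (.inr ⟨i', j⟩) ^ pencilExponent a b σ t i' j) : i = i' := by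
  have hassoc : Associated (pencil a b (σ i)) (pencil a b (σ i')) :=
    ((Y.associated_prod_pow_pencilExponent P i).symm.trans (.of_eq h)).trans
      (Y.associated_prod_pow_pencilExponent P i')
  exact Y.injective
    (eq_of_dvd_pencil_of_dvd_pencil P.isRelPrime (P.not_isUnit hunits _) dvd_rfl hassoc.dvd)

theorem two_le_sum_pencilExponent (Y : IsPrimeSystem 𝒜 a b σ t)
    (P : IsGeneratingPencil 𝒜 g a b)
    (hunits : ∀ u : B, IsUnit u → ∃ c : k, u = algebraMap k B c) {i : I}
    (hi : ¬ Prime (pencil a b (σ i))) : 2 ≤ ∑ j, pencilExponent a b σ t i j := by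
  contrapose! hi
  obtain ⟨j⟩ := Y.nonempty P hunits i
  have hcard : Fintype.card (J i) ≤ ∑ j, pencilExponent a b σ t i j :=
    card_le_sum_of_forall_one_le (Y.pencilExponent_pos i)
  have : Subsingleton (J i) := Fintype.card_le_one_iff_subsingleton.mp (by omega)
  have hassoc := Y.associated_prod_pow_pencilExponent P i
  rw [Fintype.sum_subsingleton _ j] at hi
  have hj : pencilExponent a b σ t i j = 1 := by have := Y.pencilExponent_pos i j; omega
  rw [Fintype.prod_subsingleton _ j, hj, pow_one] at hassoc
  exact hassoc.prime (Y.prime _)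

theorem exists_isPrimeSystem_trinomial_eq_zero [IsAlgClosed k] (Y : IsPrimeSystem 𝒜 a b σ t)
    (P : IsGeneratingPencil 𝒜 g a b)
    (hunits : ∀ u : B, IsUnit u → ∃ c : k, u = algebraMap k B c) {i₀ i₁ : I} (hi : i₀ ≠ i₁) :
    ∃ (t' : (V ⊕ Σ i, J i) → B) (lam : I → k), IsPrimeSystem 𝒜 a b σ t' ∧
      ∀ i ∈ ({i₀, i₁}ᶜ : Set I), lam i ≠ 0 ∧
        ∏ j, t' (.inr ⟨i₀, j⟩) ^ pencilExponent a b σ t' i₀ j +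
          lam i • ∏ j, t' (.inr ⟨i₁, j⟩) ^ pencilExponent a b σ t' i₁ j +
          ∏ j, t' (.inr ⟨i, j⟩) ^ pencilExponent a b σ t' i j = 0 := by
  classical
  choose x y hxy using fun i =>
    exists_smul_add_smul_eq_pencil (a := a) (b := b) (Y.injective.ne hi) (σ i)
  have hx : ∀ i, i ≠ i₁ → x i ≠ 0 := fun i hi₁ =>
    P.ne_zero_of_smul_add_smul_eq hunits (Y.injective.ne hi₁) (hxy i)
  have hy : ∀ i, i ≠ i₀ → y i ≠ 0 := fun i hi₀ =>
    P.ne_zero_of_smul_add_smul_eq hunits (Y.injective.ne hi₀) ((add_comm _ _).trans (hxy i))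
  -- Rescaling the `i`-th monomial by `-1 / x i` normalises its relation to the trinomial form.
  let κ : I → k := fun i => if i ∈ ({i₀, i₁} : Set I) then 1 else -(x i)⁻¹
  have hκ : ∀ i, κ i ≠ 0 := fun i => by
    by_cases h : i ∈ ({i₀, i₁} : Set I)
    · rw [show κ i = 1 from if_pos h]
      exact one_ne_zero
    · rw [show κ i = -(x i)⁻¹ from if_neg h]
      exact neg_ne_zero.mpr (inv_ne_zero (hx i fun h' => h (.inr h')))
  obtain ⟨t', Y', ht'⟩ := Y.exists_isPrimeSystem_prod_pow_eq_smul P hunits hκ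
  refine ⟨t', fun i => y i / x i, Y', fun i h => ?_⟩
  have hxi : x i ≠ 0 := hx i fun h' => h (.inr h')
  refine ⟨div_ne_zero (hy i fun h' => h (.inl h')) hxi, ?_⟩
  rw [ht', ht', ht', show κ i₀ = 1 from if_pos (.inl rfl), show κ i₁ = 1 from if_pos (.inr rfl),
    show κ i = -(x i)⁻¹ from if_neg h, ← hxy i]
  match_scalars <;> field_simp <;> ring

end Exponents

end IsPrimeSystem

theorem mem_compl_zero_one_iff {r : ℕ} (hr : 1 ≤ r) {i : Fin (r + 1)} :
    i ∈ ({0, 1}ᶜ : Set (Fin (r + 1))) ↔ 2 ≤ (i : ℕ) := by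
  have hone : ((1 : Fin (r + 1)) : ℕ) = 1 := by rw [Fin.val_one', Nat.mod_eq_of_lt (by omega)]
  rw [Set.mem_compl_iff, Set.mem_insert_iff, Set.mem_singleton_iff, Fin.ext_iff, Fin.ext_iff, hone,
    Fin.val_zero]
  omega

theorem exists_injective_fin_range_eq {α : Type*} {T : Finset α} {n : ℕ} (h : T.card = n) :
    ∃ σ : Fin n → α, Function.Injective σ ∧ Set.range σ = T := by
  let e := (T.equivFinOfCardEq h).symm
  refine ⟨fun i => e i, Subtype.val_injective.comp e.injective, ?_⟩
  exact (e.surjective.range_comp Subtype.val).trans Subtype.range_coe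

section Classification

variable [IsAlgClosed k] {ι B : Type*} [CommRing B] [IsDomain B] [Algebra k B]
  [UniqueFactorizationMonoid B] [AddCommGroup ι] [DecidableEq ι] {𝒜 : ι → Submodule k B}
  [GradedAlgebra 𝒜] {g : ι} {a b : B}

theorem TrinomialData.nonempty_algEquiv [TwoUniqueSums ι] (Δ : TrinomialData k) {V : Type*}
    {σ : Fin (Δ.r + 1) → Option k} {t : (V ⊕ Σ i, Fin (Δ.n i)) → B}
    (Y : IsPrimeSystem 𝒜 a b σ t) (P : IsGeneratingPencil 𝒜 g a b)
    (hunits : ∀ u : B, IsUnit u → ∃ c : k, u = algebraMap k B c)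
    (hβ : pencilExponent a b σ t = Δ.β)
    (hrel : ∀ i : Fin (Δ.r + 1), 2 ≤ (i : ℕ) → ∏ j, t (.inr ⟨0, j⟩) ^ Δ.β 0 j +
      Δ.lam i • ∏ j, t (.inr ⟨1, j⟩) ^ Δ.β 1 j + ∏ j, t (.inr ⟨i, j⟩) ^ Δ.β i j = 0) :
    Nonempty (B ≃ₐ[k] MvPolynomial V Δ.Ring) := by
  obtain ⟨Φ, hΦ⟩ := Δ.exists_algHom_generator_eq hrel
  have : NeZero Δ.r := ⟨Nat.ne_of_gt Δ.one_le_r⟩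
  refine Y.nonempty_algEquiv P hunits Fin.zero_ne_one' (w := Δ.generator V)
    Δ.adjoin_range_generator (fun i hi => ⟨-1, -Δ.lam i, ?_⟩) Φ hΦ
  rw [hβ]
  exact Δ.prod_generator_pow_eq ((mem_compl_zero_one_iff Δ.one_le_r).mp hi)

namespace IsGeneratingPencil

variable [AddGroup.FG ι] [IsAddTorsionFree ι]

theorem exists_reduced_trinomialData_of_range_eq (P : IsGeneratingPencil 𝒜 g a b)
    (hunits : ∀ u : B, IsUnit u → ∃ c : k, u = algebraMap k B c) {r : ℕ} (hr : 2 ≤ r)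
    {σ : Fin (r + 1) → Option k} (hσ : Function.Injective σ)
    (hrange : Set.range σ = {l : Option k | ¬ Prime (pencil a b l)}) :
    ∃ Δ : TrinomialData k, Δ.Reduced ∧ ∃ m : ℕ,
      Nonempty (B ≃ₐ[k] MvPolynomial (Fin m) Δ.Ring) := by
  have one_le_r : 1 ≤ r := one_le_two.trans hr
  obtain ⟨m, n, t₀, Y₀⟩ := P.exists_isPrimeSystem hσ hrange.ge
  have : NeZero r := ⟨Nat.ne_of_gt one_le_r⟩
  obtain ⟨t, lam, Y, htri⟩ :=
    Y₀.exists_isPrimeSystem_trinomial_eq_zero P hunits (Fin.zero_ne_one' (n := r))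
  simp only [mem_compl_zero_one_iff one_le_r] at htri
  have one_le_n : ∀ i, 1 ≤ n i := fun i => Fin.pos_iff_nonempty.mpr (Y.nonempty P hunits i)
  let Δ : TrinomialData k :=
    { r := r
      one_le_r := one_le_r
      n := n
      one_le_n := one_le_n
      two_le_total := (Nat.le_succ_of_le hr).trans <|
        (Fintype.card_fin _).ge.trans (card_le_sum_of_forall_one_le one_le_n)
      β := pencilExponent a b σ t
      β_pos := Y.pencilExponent_pos
      gcd_coprime := fun i i' hi => Y.coprime_gcd_pencilExponent P hunits hi
      lam := lam
      lam_ne_zero := fun i hi => (htri i hi).1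
      lam_injOn := fun i i' hi hi' hlam => Y.eq_of_prod_pow_pencilExponent_eq P hunits <| by
        have h := (htri i hi).2
        rw [hlam] at h
        exact add_left_cancel (h.trans (htri i' hi').2.symm) }
  have hnot_prime : ∀ i, ¬ Prime (pencil a b (σ i)) := fun i => hrange.le ⟨i, rfl⟩
  exact ⟨Δ, .inr ⟨hr, fun i => Y.two_le_sum_pencilExponent P hunits (hnot_prime i)⟩, m,
    Δ.nonempty_algEquiv Y P hunits rfl fun i hi => (htri i hi).2⟩

theorem exists_reduced_trinomialData_of_subset_range (P : IsGeneratingPencil 𝒜 g a b)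
    (hunits : ∀ u : B, IsUnit u → ∃ c : k, u = algebraMap k B c)
    {σ : Fin 2 → Option k} (hσ : Function.Injective σ)
    (hrange : {l : Option k | ¬ Prime (pencil a b l)} ⊆ Set.range σ) :
    ∃ Δ : TrinomialData k, Δ.Reduced ∧ ∃ m : ℕ,
      Nonempty (B ≃ₐ[k] MvPolynomial (Fin m) Δ.Ring) := by
  obtain ⟨m, n, t, Y⟩ := P.exists_isPrimeSystem hσ hrange
  have hcompl : ∀ i : Fin 2, i ∉ ({0, 1}ᶜ : Set (Fin 2)) := fun i hi =>
    absurd i.2 ((mem_compl_zero_one_iff le_rfl).mp hi).not_gt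
  obtain ⟨toPolynomial⟩ := Y.nonempty_algEquiv P hunits zero_ne_one
    (adjoin_range_X (R := k)) (fun i hi => absurd hi (hcompl i)) (aeval t) (aeval_X t)
  have hcard : 2 ≤ Fintype.card (Fin m ⊕ Σ i, Fin (n i)) := by
    simp only [Fintype.card_sum, Fintype.card_sigma, Fintype.card_fin]
    exact le_add_left <| (Fintype.card_fin 2).ge.trans <| card_le_sum_of_forall_one_le fun i =>
      Fin.pos_iff_nonempty.mpr (Y.nonempty P hunits i)
  obtain ⟨m', ⟨toPlane⟩⟩ := TrinomialData.exists_nonempty_algEquiv_plane (k := k) _ hcard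
  exact ⟨_, TrinomialData.reduced_plane, m', ⟨toPolynomial.trans toPlane⟩⟩

theorem exists_reduced_trinomialData (P : IsGeneratingPencil 𝒜 g a b)
    (hunits : ∀ u : B, IsUnit u → ∃ c : k, u = algebraMap k B c) :
    ∃ Δ : TrinomialData k, Δ.Reduced ∧ ∃ m : ℕ,
      Nonempty (B ≃ₐ[k] MvPolynomial (Fin m) Δ.Ring) := by
  have hfin := P.finite_setOf_not_prime hunits
  rcases le_or_gt hfin.toFinset.card 2 with hcard | hcard
  · have : Infinite k := IsAlgClosed.instInfinite
    obtain ⟨T, hT, hTcard⟩ := Infinite.exists_superset_card_eq hfin.toFinset 2 hcard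
    obtain ⟨σ, hσ, hrange⟩ := exists_injective_fin_range_eq hTcard
    refine P.exists_reduced_trinomialData_of_subset_range hunits hσ ?_
    rwa [hrange, ← hfin.coe_toFinset, Finset.coe_subset]
  · obtain ⟨r, hr⟩ := Nat.exists_eq_add_of_lt hcard
    obtain ⟨σ, hσ, hrange⟩ := exists_injective_fin_range_eq hr
    exact P.exists_reduced_trinomialData_of_range_eq hunits (Nat.le_add_right 2 r) hσ
      (hrange.trans hfin.coe_toFinset)

end IsGeneratingPencil

end Classification

/-- Over an algebraically closed field `k`, a unirational UFD `B` of finite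
transcendence degree `n ≥ 1` over `k` admitting an effective unmixed `ℤ^{n-1}`-grading with
`B₀ = k` is isomorphic to a polynomial ring in some `m` variables over `k[Δ]` for some reduced
trinomial data `Δ` over `k`. -/
theorem graded_unirational_ufd_classification
    [IsAlgClosed k]
    (B : Type*) [CommRing B] [IsDomain B] [Algebra k B] [UniqueFactorizationMonoid B]
    (n : ℕ) (hn : 1 ≤ n)
    -- `B` has transcendence degree `n` over `k`
    (x : Fin n → B) (hx : IsTranscendenceBasis k x)
    -- `B` is unirational over `k`
    (hunir : ∃ (s : ℕ) (φ : FractionRing B →+* FractionRing (MvPolynomial (Fin s) k)),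
      ∀ c : k, φ (algebraMap B (FractionRing B) (algebraMap k B c)) =
        algebraMap (MvPolynomial (Fin s) k) (FractionRing (MvPolynomial (Fin s) k)) (C c))
    -- an effective unmixed `ℤ^{n-1}`-grading with `B₀ = k`
    (𝒜 : (Fin (n - 1) → ℤ) → Submodule k B) [GradedAlgebra 𝒜]
    (heff : AddSubgroup.closure {g : Fin (n - 1) → ℤ | 𝒜 g ≠ ⊥} = ⊤)
    (hunmixed : ∀ g : Fin (n - 1) → ℤ, 𝒜 g ≠ ⊥ → 𝒜 (-g) ≠ ⊥ → g = 0)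
    (hB0 : ∀ b ∈ 𝒜 (0 : Fin (n - 1) → ℤ), ∃ c : k, b = algebraMap k B c) :
    ∃ Δ : TrinomialData k, Δ.Reduced ∧ ∃ m : ℕ,
      Nonempty (B ≃ₐ[k] MvPolynomial (Fin m) Δ.Ring) := by
  obtain ⟨s, φ, hφ⟩ := hunir
  let φₐ : FractionRing B →ₐ[k] FractionRing (MvPolynomial (Fin s) k) :=
    { φ with
      commutes' := fun c => by
        rw [IsScalarTower.algebraMap_apply k B (FractionRing B)]
        exact hφ c }
  have htrdeg : Algebra.trdeg k B = Module.finrank ℤ (Fin (n - 1) → ℤ) + 1 := by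
    rw [← Cardinal.lift_uzero (Algebra.trdeg k B), ← hx.lift_cardinalMk_eq_trdeg, Cardinal.mk_fin,
      Cardinal.lift_natCast, Module.finrank_fin_fun]
    exact_mod_cast (Nat.sub_add_cancel hn).symm
  obtain ⟨g, a, b, P⟩ := exists_isGeneratingPencil_of_unirational heff hB0 htrdeg φₐ
  exact P.exists_reduced_trinomialData fun u hu =>
    exists_algebraMap_eq_of_isUnit hunmixed hB0 hu
end
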